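/- arXiv:2603.27072 — 9 statements merged into one kernel-verified Lean document; each statement's English description precedes it below -/
import Mathlib

section
/- Let L ≥ 3 be an integer, λ > 0, q := 2/L, and let M♮ ∈ ℝ^{d_L × d_0} with r := min{d_0, d_L}. Suppose min_{1 ≤ i ≤ L−1} d_i ≥ min{d_0, d_L} and σ_i(M♮) ≠ τ for every i ∈ {1, …, r}, where τ := (1 − q/2)·λ^{1/(2−q)}·(1 − q)^{(q−1)/(2−q)}. Consider the ℓ²-regularized deep matrix factorization objective 𝓛(W_1, …, W_L) := ‖M♮ − W_L···W_1‖_F² + (λ/L)·Σ_{i=1}^L ‖W_i‖_F² with W_i ∈ ℝ^{d_i × d_{i−1}}. Then the function (w, i) ↦ ‖W_i‖_F is constant over the product of the set of global minimizers of 𝓛 and {1, …, L}; that is, for any two global minimizers (W*_1, …, W*_L) and (W'_1, …, W'_L) of 𝓛 and any layer indices i, j ∈ {1, …, L}, ‖W*_i‖_F = ‖W'_j‖_F. -/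
open Matrix

/-- The `i`-th largest singular value of a real matrix `A` (`0`-indexed),
i.e. the non-increasing rearrangement of the square roots of the
eigenvalues of the positive semidefinite matrix `Aᵀ A`. -/
noncomputable def singularValue {m n : ℕ} (A : Matrix (Fin m) (Fin n) ℝ) (i : Fin (min m n)) : ℝ :=
  let ev : Fin n → ℝ := fun j => Real.sqrt ((Matrix.isHermitian_conjTranspose_mul_self A).eigenvalues j)
  (ev ∘ Tuple.sort ev) ((Fin.castLE (Nat.min_le_right m n) i).rev)

/-- Frobenius norm of a real matrix. -/
noncomputable def frobNorm {m n : ℕ} (A : Matrix (Fin m) (Fin n) ℝ) : ℝ :=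
  Real.sqrt (∑ i, ∑ j, (A i j) ^ 2)

/-- `‖A‖_{S^q}^q = ∑_{i=1}^{min m n} σ_i(A)^q`. -/
noncomputable def schattenPow {m n : ℕ} (A : Matrix (Fin m) (Fin n) ℝ) (q : ℝ) : ℝ :=
  ∑ i : Fin (min m n), (singularValue A i) ^ q

/-- Schatten-`q` quasi-norm `‖A‖_{S^q} = (∑ σ_i(A)^q)^{1/q}`. -/
noncomputable def schattenNorm {m n : ℕ} (A : Matrix (Fin m) (Fin n) ℝ) (q : ℝ) : ℝ :=
  (schattenPow A q) ^ (1 / q)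

/-- `chainProd d W L = W_{L-1} * ⋯ * W_1 * W_0` (the end-to-end product of the
first `L` layers, `W_i : ℝ^{d_{i+1} × d_i}`). -/
noncomputable def chainProd (d : ℕ → ℕ) (W : ∀ i : ℕ, Matrix (Fin (d (i + 1))) (Fin (d i)) ℝ) :
    (L : ℕ) → Matrix (Fin (d L)) (Fin (d 0)) ℝ
  | 0 => 1
  | (L + 1) => W L * chainProd d W L

/-- The ℓ²-regularized deep matrix factorization objective
`𝓛(W) = ‖M♮ − W_L ⋯ W_1‖_F² + (λ/L) ∑ᵢ ‖W_i‖_F²`. -/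
noncomputable def deepLoss (L : ℕ) (lam : ℝ) (d : ℕ → ℕ)
    (Mnat : Matrix (Fin (d L)) (Fin (d 0)) ℝ)
    (W : ∀ i : ℕ, Matrix (Fin (d (i + 1))) (Fin (d i)) ℝ) : ℝ :=
  frobNorm (Mnat - chainProd d W L) ^ 2 + (lam / L) * ∑ i : Fin L, frobNorm (W i.1) ^ 2

/-- The Schatten-regularized objective
`𝓛_{M♮}(M) = ‖M♮ − M‖_F² + λ‖M‖_{S^{2/L}}^{2/L}`. -/
noncomputable def schattenLoss (L : ℕ) (lam : ℝ) {m n : ℕ}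
    (Mnat M : Matrix (Fin m) (Fin n) ℝ) : ℝ :=
  frobNorm (Mnat - M) ^ 2 + lam * schattenPow M (2 / L)


lemma frob_sq {m n : ℕ} (A : Matrix (Fin m) (Fin n) ℝ) : frobNorm A ^ 2 = trace (Aᵀ * A) := by
  unfold frobNorm
  rw [Real.sq_sqrt (by positivity)]
  simp only [trace, diag, mul_apply, transpose_apply]
  rw [Finset.sum_comm]
  simp only [sq]

lemma chain_update_le (d : ℕ → ℕ) (W : ∀ i : ℕ, Matrix (Fin (d (i + 1))) (Fin (d i)) ℝ) (i : ℕ)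
    (H : Matrix (Fin (d (i + 1))) (Fin (d i)) ℝ) (k : ℕ) (hk : k ≤ i) :
    chainProd d (Function.update W i H) k = chainProd d W k := by
  induction k with
  | zero => rfl
  | succ k ih =>
    simp only [chainProd]
    rw [ih (by omega), Function.update_of_ne (by omega)]

lemma chain_update_lin (d : ℕ → ℕ) (W : ∀ i : ℕ, Matrix (Fin (d (i + 1))) (Fin (d i)) ℝ) (i : ℕ)
    (H : Matrix (Fin (d (i + 1))) (Fin (d i)) ℝ) (t : ℝ) (k : ℕ) (hk : i < k) :
    chainProd d (Function.update W i (W i + t • H)) k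
      = chainProd d W k + t • chainProd d (Function.update W i H) k := by
  induction k with
  | zero => omega
  | succ k ih =>
    simp only [chainProd]
    rcases Nat.lt_or_ge i k with h | h
    · rw [ih h, Function.update_of_ne (by omega), Function.update_of_ne (by omega)]
      simp [Matrix.mul_add]
    · obtain rfl : i = k := by omega
      rw [chain_update_le _ _ _ _ _ le_rfl, chain_update_le _ _ _ _ _ le_rfl]
      simp [Matrix.add_mul]

lemma chain_update_shift (d : ℕ → ℕ) (W : ∀ i : ℕ, Matrix (Fin (d (i + 1))) (Fin (d i)) ℝ) (i : ℕ)
    (E : Matrix (Fin (d (i + 1))) (Fin (d (i + 1))) ℝ) (k : ℕ) (hk : i + 1 < k) :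
    chainProd d (Function.update W i (E * W i)) k
      = chainProd d (Function.update W (i+1) (W (i+1) * E)) k := by
  induction k with
  | zero => omega
  | succ k ih =>
    simp only [chainProd]
    rcases Nat.lt_or_ge (i+1) k with h | h
    · rw [ih h, Function.update_of_ne (by omega), Function.update_of_ne (by omega)]
    · obtain rfl : i + 1 = k := by omega
      rw [chain_update_le _ _ _ _ _ le_rfl, Function.update_of_ne (by omega)]
      simp only [chainProd, Function.update_self]
      rw [chain_update_le _ _ _ _ _ le_rfl]
      simp [Matrix.mul_assoc]

lemma chain_update_zero (d : ℕ → ℕ) (W : ∀ i : ℕ, Matrix (Fin (d (i + 1))) (Fin (d i)) ℝ)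
    (E : Matrix (Fin (d 0)) (Fin (d 0)) ℝ) (k : ℕ) :
    chainProd d (Function.update W 0 (W 0 * E)) (k+1) = chainProd d W (k+1) * E := by
  induction k with
  | zero => simp [chainProd]
  | succ k ih =>
    have e : chainProd d W (k+1+1) = W (k+1) * chainProd d W (k+1) := rfl
    rw [chainProd, ih, Function.update_of_ne (by omega), e, Matrix.mul_assoc]

lemma quad_zero (a b : ℝ) (h : ∀ t : ℝ, 0 ≤ t ^ 2 * a - 2 * t * b) : b = 0 := by
  by_contra hb
  have ha : 0 ≤ a ∨ a < 0 := le_or_gt 0 a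
  have h1 := h (b / (|a| + 1))
  have hp : 0 < |a| + 1 := by positivity
  have e : (b / (|a| + 1)) ^ 2 * a - 2 * (b / (|a| + 1)) * b
      = b ^ 2 / (|a|+1)^2 * (a - 2 * (|a| + 1)) := by field_simp
  rw [e] at h1
  have : 0 < b ^ 2 / (|a|+1)^2 := by positivity
  have h2 : a - 2 * (|a| + 1) < 0 := by linarith [le_abs_self a, abs_nonneg a]
  nlinarith

lemma trace_symm' {m n : ℕ} (A B : Matrix (Fin m) (Fin n) ℝ) : trace (Aᵀ * B) = trace (Bᵀ * A) := by
  rw [← trace_transpose, transpose_mul, transpose_transpose]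

lemma trace_ext' {m n : ℕ} (A B : Matrix (Fin m) (Fin n) ℝ)
    (h : ∀ E : Matrix (Fin m) (Fin n) ℝ, trace (Aᵀ * E) = trace (Bᵀ * E)) : A = B := by
  have h1 := h (A - B)
  have h2 : frobNorm (A - B) ^ 2 = 0 := by
    rw [frob_sq, transpose_sub, Matrix.sub_mul, trace_sub, h1, sub_self]
  unfold frobNorm at h2
  rw [Real.sq_sqrt (by positivity)] at h2
  ext i j
  have h3 := (Finset.sum_eq_zero_iff_of_nonneg (fun i _ => by positivity)).1 h2 i (Finset.mem_univ _)
  have h4 := (Finset.sum_eq_zero_iff_of_nonneg (fun i _ => by positivity)).1 h3 j (Finset.mem_univ _)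
  have h5 : (A - B) i j = 0 := by simpa using h4
  simpa [sub_eq_zero] using h5

lemma frob_add {m n : ℕ} (A B : Matrix (Fin m) (Fin n) ℝ) (t : ℝ) :
    frobNorm (A + t • B) ^ 2 = frobNorm A ^ 2 + 2 * t * trace (Aᵀ * B) + t ^ 2 * frobNorm B ^ 2 := by
  simp only [frob_sq, transpose_add, transpose_smul, Matrix.add_mul, Matrix.mul_add, trace_add,
    Matrix.smul_mul, Matrix.mul_smul, trace_smul, smul_eq_mul]
  rw [trace_symm' B A]; ring

lemma grad_cond (n : ℕ) (lam : ℝ) (d : ℕ → ℕ)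
    (M : Matrix (Fin (d (n+1))) (Fin (d 0)) ℝ)
    (W : ∀ i : ℕ, Matrix (Fin (d (i + 1))) (Fin (d i)) ℝ)
    (hW : ∀ V : ∀ i : ℕ, Matrix (Fin (d (i + 1))) (Fin (d i)) ℝ,
      deepLoss (n+1) lam d M W ≤ deepLoss (n+1) lam d M V)
    (i : ℕ) (hi : i < n + 1) (H : Matrix (Fin (d (i + 1))) (Fin (d i)) ℝ) :
    trace ((M - chainProd d W (n+1))ᵀ * chainProd d (Function.update W i H) (n+1))
      = lam / (n+1) * trace ((W i)ᵀ * H) := by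
  rw [← sub_eq_zero]
  apply quad_zero (frobNorm (chainProd d (Function.update W i H) (n+1)) ^ 2
    + lam / (n+1) * frobNorm H ^ 2)
  intro t
  have h := hW (Function.update W i (W i + t • H))
  unfold deepLoss at h
  rw [chain_update_lin _ _ _ _ _ _ hi] at h
  have e1 : M - (chainProd d W (n+1) + t • chainProd d (Function.update W i H) (n+1))
      = (M - chainProd d W (n+1)) + (-t) • chainProd d (Function.update W i H) (n+1) := by
    rw [neg_smul]; abel
  rw [e1, frob_add] at h
  have e2 : ∑ k : Fin (n+1), frobNorm (Function.update W i (W i + t • H) k.1) ^ 2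
      = ∑ k : Fin (n+1), frobNorm (W k.1) ^ 2
        + (2 * t * trace ((W i)ᵀ * H) + t ^ 2 * frobNorm H ^ 2) := by
    rw [← sub_eq_iff_eq_add', ← Finset.sum_sub_distrib, Finset.sum_eq_single ⟨i, hi⟩]
    · simp only [Function.update_self]
      rw [frob_add]; ring
    · intro b _ hb
      rw [Function.update_of_ne, sub_self]
      intro h; apply hb; ext; exact h
    · simp
  rw [e2] at h
  push_cast at h
  nlinarith

lemma balanced (n : ℕ) (lam : ℝ) (hlam : 0 < lam) (d : ℕ → ℕ)
    (M : Matrix (Fin (d (n+1))) (Fin (d 0)) ℝ)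
    (W : ∀ i : ℕ, Matrix (Fin (d (i + 1))) (Fin (d i)) ℝ)
    (hW : ∀ V : ∀ i : ℕ, Matrix (Fin (d (i + 1))) (Fin (d i)) ℝ,
      deepLoss (n+1) lam d M W ≤ deepLoss (n+1) lam d M V)
    (i : ℕ) (hi : i < n) : (W (i+1))ᵀ * W (i+1) = W i * (W i)ᵀ := by
  apply trace_ext'
  intro E
  have h1 := grad_cond n lam d M W hW i (by omega) (E * W i)
  have h2 := grad_cond n lam d M W hW (i+1) (by omega) (W (i+1) * E)
  rw [chain_update_shift _ _ _ _ _ (by omega), h2] at h1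
  have hc : lam / ((n:ℝ)+1) ≠ 0 := by positivity
  have h3 := mul_left_cancel₀ hc h1
  rw [transpose_mul, transpose_mul, transpose_transpose, transpose_transpose, Matrix.mul_assoc, h3,
    trace_mul_comm, Matrix.mul_assoc, trace_mul_comm]

lemma top_cond (n : ℕ) (lam : ℝ) (d : ℕ → ℕ)
    (M : Matrix (Fin (d (n+1))) (Fin (d 0)) ℝ)
    (W : ∀ i : ℕ, Matrix (Fin (d (i + 1))) (Fin (d i)) ℝ)
    (hW : ∀ V : ∀ i : ℕ, Matrix (Fin (d (i + 1))) (Fin (d i)) ℝ,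
      deepLoss (n+1) lam d M W ≤ deepLoss (n+1) lam d M V) :
    (M - chainProd d W (n+1)) * (chainProd d W (n+1))ᵀ = (lam / (n+1)) • (W n * (W n)ᵀ) := by
  apply trace_ext'
  intro E
  have h1 := grad_cond n lam d M W hW n (by omega) (E * W n)
  have : chainProd d (Function.update W n (E * W n)) (n+1) = E * chainProd d W (n+1) := by
    rw [chainProd, chain_update_le _ _ _ _ _ le_rfl, Function.update_self, chainProd, Matrix.mul_assoc]
  rw [this] at h1
  rw [transpose_mul, transpose_transpose, transpose_smul, transpose_mul, transpose_transpose,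
    Matrix.smul_mul, trace_smul, smul_eq_mul, Matrix.mul_assoc, trace_mul_comm, Matrix.mul_assoc, h1,
    trace_mul_comm, Matrix.mul_assoc, trace_mul_comm, Matrix.mul_assoc (W n), trace_mul_comm]

lemma bot_cond (n : ℕ) (lam : ℝ) (d : ℕ → ℕ)
    (M : Matrix (Fin (d (n+1))) (Fin (d 0)) ℝ)
    (W : ∀ i : ℕ, Matrix (Fin (d (i + 1))) (Fin (d i)) ℝ)
    (hW : ∀ V : ∀ i : ℕ, Matrix (Fin (d (i + 1))) (Fin (d i)) ℝ,
      deepLoss (n+1) lam d M W ≤ deepLoss (n+1) lam d M V) :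
    (chainProd d W (n+1))ᵀ * (M - chainProd d W (n+1)) = (lam / (n+1)) • ((W 0)ᵀ * (W 0)) := by
  apply trace_ext'
  intro E
  have h1 := grad_cond n lam d M W hW 0 (by omega) (W 0 * E)
  rw [chain_update_zero] at h1
  rw [transpose_mul, transpose_transpose, transpose_smul, transpose_mul, transpose_transpose,
    Matrix.smul_mul, trace_smul, smul_eq_mul, Matrix.mul_assoc, h1, Matrix.mul_assoc]

/-- scalar uniqueness -/
lemma scalar_crit (n : ℕ) (lam s y : ℝ) (hy : 0 ≤ y)
    (h : ∀ z : ℝ, 0 ≤ z → (s - y ^ (n+1)) ^ 2 + lam * y ^ 2 ≤ (s - z ^ (n+1)) ^ 2 + lam * z ^ 2) :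
    (n + 1) * y ^ (n+1) * (s - y ^ (n+1)) = lam * y ^ 2 := by
  rcases hy.eq_or_lt with rfl | hy
  · simp
  have hd : HasDerivAt (fun z : ℝ => (s - z ^ (n+1)) ^ 2 + lam * z ^ 2)
      (2 * (s - y ^ (n+1)) * (-((n+1) * y ^ n)) + lam * (2 * y)) y := by
    have h1 : HasDerivAt (fun z : ℝ => s - z ^ (n+1)) (-((n+1) * y ^ n)) y := by
      have := (hasDerivAt_pow (n+1) y).const_sub s
      simpa using this
    have h2 := h1.pow 2
    have h3 := (hasDerivAt_pow 2 y).const_mul lam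
    refine (h2.add h3).congr_deriv ?_
    norm_num
  have hm : IsLocalMin (fun z : ℝ => (s - z ^ (n+1)) ^ 2 + lam * z ^ 2) y := by
    filter_upwards [lt_mem_nhds hy] with z hz using h z hz.le
  have h0 := hm.hasDerivAt_eq_zero hd
  have : y * (2 * (s - y ^ (n+1)) * (-((n+1) * y ^ n)) + lam * (2 * y)) = 0 := by rw [h0, mul_zero]
  rw [pow_succ] at this ⊢
  linarith

lemma scalar_lt (n : ℕ) (hn : 2 ≤ n) (lam s τ q y z : ℝ) (hlam : 0 < lam) (hy : 0 ≤ y) (hyz : y < z)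
    (hq : q = 2 / ((n:ℝ)+1))
    (hτ : τ = (1 - q / 2) * lam ^ (1 / (2 - q)) * (1 - q) ^ ((q - 1) / (2 - q)))
    (hs : s ≠ τ)
    (h : ∀ x : ℝ, 0 ≤ x → (s - y ^ (n+1)) ^ 2 + lam * y ^ 2 ≤ (s - x ^ (n+1)) ^ 2 + lam * x ^ 2)
    (h' : ∀ x : ℝ, 0 ≤ x → (s - z ^ (n+1)) ^ 2 + lam * z ^ 2 ≤ (s - x ^ (n+1)) ^ 2 + lam * x ^ 2) :
    False := by
  have hz : 0 < z := by linarith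
  have hn' : (2:ℝ) ≤ n := by exact_mod_cast hn
  have c1 := scalar_crit n lam s y hy h
  have c2 := scalar_crit n lam s z hz.le h'
  have e0 : (s - y ^ (n+1)) ^ 2 + lam * y ^ 2 = (s - z ^ (n+1)) ^ 2 + lam * z ^ 2 :=
    le_antisymm (h z hz.le) (h' y hy)
  have hq0 : 0 < q := by rw [hq]; positivity
  have hq1 : q < 1 := by rw [hq, div_lt_one (by positivity)]; linarith
  set κ := lam * (1 - q) with hκ
  have hκ0 : 0 < κ := mul_pos hlam (by linarith)
  have hN : (0:ℝ) < n + 1 := by positivity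
  have key : ∀ x : ℝ, (n + 1) * x ^ (n+1) * (s - x ^ (n+1)) = lam * x ^ 2 →
      (s - x ^ (n+1)) ^ 2 + lam * x ^ 2 = s ^ 2 + x ^ 2 * (κ - x ^ (2 * n)) := by
    intro x hx
    have : x ^ (n+1) * (s - x ^ (n+1)) = q / 2 * lam * x ^ 2 := by
      rw [hq]; field_simp; linarith
    have e : x ^ 2 * x ^ (2 * n) = x ^ (n+1) * x ^ (n+1) := by ring
    rw [mul_sub, e]
    rw [hκ]; linarith
  rw [key y c1, key z c2] at e0
  have hy0 := h 0 le_rfl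
  rw [key y c1] at hy0
  have hpow : y ^ (2 * n) < z ^ (2 * n) := pow_lt_pow_left₀ hyz hy (by omega)
  have hsq : y ^ 2 < z ^ 2 := pow_lt_pow_left₀ hyz hy (by omega)
  rcases hy.eq_or_lt with rfl | hy
  · have hz2 : 0 < z ^ 2 := by positivity
    have e1 : z ^ (2 * n) = κ := by
      have : z ^ 2 * (κ - z ^ (2 * n)) = 0 := by
        have : (0:ℝ)^2 = 0 := by simp
        rw [this] at e0; linarith
      rcases mul_eq_zero.1 this with h | h
      · exact absurd h hz2.ne'
      · linarith
    apply hs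
    have e2 : s * z ^ n = (1 - q / 2) * lam * z := by
      have a1 : z ^ (n+1) * (s - z ^ (n+1)) = q / 2 * lam * z ^ 2 := by
        rw [hq]; field_simp; linarith
      have a2 : z * (s * z ^ n) = z * ((1 - q / 2) * lam * z) := by
        have : z ^ (n+1) * z ^ (n+1) = z ^ 2 * z ^ (2 * n) := by ring
        rw [mul_sub, this, e1] at a1
        have : z * (s * z ^ n) = z ^ (n+1) * s := by ring
        rw [this, hκ] at *
        linarith
      exact mul_left_cancel₀ hz.ne' a2
    have hz1 : z = κ ^ (1 / (2 * (n:ℝ))) := by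
      rw [← e1, ← Real.rpow_natCast, ← Real.rpow_mul hz.le]
      push_cast
      rw [mul_one_div_cancel (by positivity), Real.rpow_one]
    have hzn : z ^ n = κ ^ (1 / 2 : ℝ) := by
      rw [hz1, ← Real.rpow_natCast, ← Real.rpow_mul hκ0.le]
      congr 1; field_simp
    have hs' : s = (1 - q/2) * lam * (κ ^ (1 / (2 * (n:ℝ))) / κ ^ (1/2 : ℝ)) := by
      rw [← hz1, ← hzn]; field_simp; linarith
    rw [hs', hτ, ← Real.rpow_sub hκ0, hκ, Real.mul_rpow hlam.le (by linarith)]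
    have f1 : (q - 1) / (2 - q) = 1 / (2 * (n:ℝ)) - 1 / 2 := by
      rw [hq]
      have : (2 - 2 / ((n:ℝ)+1)) = 2 * n / (n+1) := by field_simp; ring
      rw [this]; field_simp; ring
    have f2 : 1 / (2 - q) = 1 + (1 / (2 * (n:ℝ)) - 1 / 2) := by
      rw [hq]
      have : (2 - 2 / ((n:ℝ)+1)) = 2 * n / (n+1) := by field_simp; ring
      rw [this]; field_simp; ring
    rw [f1, f2, Real.rpow_add hlam, Real.rpow_one]; ring
  · have hy2 : 0 < y ^ 2 := by positivity
    have hle : κ - y ^ (2 * n) ≤ 0 := by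
      by_contra hc
      push Not at hc
      have := mul_pos hy2 hc
      simp at hy0
      linarith
    nlinarith

lemma scalar_unique (n : ℕ) (hn : 2 ≤ n) (lam s τ q y z : ℝ) (hlam : 0 < lam) (hy : 0 ≤ y) (hz : 0 ≤ z)
    (hq : q = 2 / ((n:ℝ)+1))
    (hτ : τ = (1 - q / 2) * lam ^ (1 / (2 - q)) * (1 - q) ^ ((q - 1) / (2 - q)))
    (hs : s ≠ τ)
    (h : ∀ x : ℝ, 0 ≤ x → (s - y ^ (n+1)) ^ 2 + lam * y ^ 2 ≤ (s - x ^ (n+1)) ^ 2 + lam * x ^ 2)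
    (h' : ∀ x : ℝ, 0 ≤ x → (s - z ^ (n+1)) ^ 2 + lam * z ^ 2 ≤ (s - x ^ (n+1)) ^ 2 + lam * x ^ 2) :
    y = z := by
  rcases lt_trichotomy y z with h1 | h1 | h1
  · exact (scalar_lt n hn lam s τ q y z hlam hy h1 hq hτ hs h h').elim
  · exact h1
  · exact (scalar_lt n hn lam s τ q z y hlam hz h1 hq hτ hs h' h).elim

lemma trace_vmv {m n : ℕ} (A : Matrix (Fin m) (Fin n) ℝ) (u : Fin m → ℝ) (v : Fin n → ℝ) :
    trace (Aᵀ * vecMulVec u v) = (Aᵀ *ᵥ u) ⬝ᵥ v := by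
  rw [Matrix.mul_vecMulVec, Matrix.trace_vecMulVec]

lemma adj_dot {m n : ℕ} (A : Matrix (Fin m) (Fin n) ℝ) (u : Fin m → ℝ) (v : Fin n → ℝ) :
    (Aᵀ *ᵥ u) ⬝ᵥ v = u ⬝ᵥ (A *ᵥ v) := by
  rw [Matrix.mulVec_transpose, Matrix.dotProduct_mulVec]

lemma frob_vmv {m n : ℕ} (u : Fin m → ℝ) (v : Fin n → ℝ) :
    frobNorm (vecMulVec u v) ^ 2 = (u ⬝ᵥ u) * (v ⬝ᵥ v) := by
  rw [frob_sq, trace_vmv, adj_dot, Matrix.vecMulVec_mulVec]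
  simp [dotProduct_smul, mul_comm]

lemma perturb (n : ℕ) (lam : ℝ) (d : ℕ → ℕ)
    (M : Matrix (Fin (d (n+1))) (Fin (d 0)) ℝ)
    (W : ∀ i : ℕ, Matrix (Fin (d (i + 1))) (Fin (d i)) ℝ)
    (hW : ∀ V : ∀ i : ℕ, Matrix (Fin (d (i + 1))) (Fin (d i)) ℝ,
      deepLoss (n+1) lam d M W ≤ deepLoss (n+1) lam d M V)
    (e : ∀ i, Fin (d i) → ℝ) (y z s : ℝ)
    (hu : ∀ i, i ≤ n + 1 → e i ⬝ᵥ e i = 1)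
    (h1 : ∀ i, i ≤ n → W i *ᵥ e i = y • e (i+1))
    (h2 : ∀ i, i ≤ n → (W i)ᵀ *ᵥ e (i+1) = y • e i)
    (hs : s = e (n+1) ⬝ᵥ (M *ᵥ e 0)) :
    (s - y ^ (n+1)) ^ 2 + lam * y ^ 2 ≤ (s - z ^ (n+1)) ^ 2 + lam * z ^ 2 := by
  have hP : ∀ k, k ≤ n + 1 → (chainProd d W k)ᵀ *ᵥ e k = y ^ k • e 0 := by
    intro k
    induction k with
    | zero => intro _; simp [chainProd]
    | succ k ih =>
      intro hk
      rw [chainProd, transpose_mul, ← mulVec_mulVec, h2 k (by omega), mulVec_smul, ih (by omega),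
        smul_smul, pow_succ']
  let V : ∀ i : ℕ, Matrix (Fin (d (i + 1))) (Fin (d i)) ℝ :=
    fun i => W i + (z - y) • vecMulVec (e (i+1)) (e i)
  have hV : ∀ k, k ≤ n + 1 →
      chainProd d V k = chainProd d W k + (z ^ k - y ^ k) • vecMulVec (e k) (e 0) := by
    intro k
    induction k with
    | zero => intro _; simp [chainProd]
    | succ k ih =>
      intro hk
      rw [chainProd, chainProd, ih (by omega)]
      simp only [V, Matrix.add_mul, Matrix.mul_add, Matrix.smul_mul, Matrix.mul_smul]
      rw [Matrix.mul_vecMulVec, h1 k (by omega), Matrix.vecMulVec_mul, ← Matrix.mulVec_transpose,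
        hP k (by omega), Matrix.vecMulVec_mul_vecMulVec, hu k (by omega), one_smul,
        Matrix.vecMulVec_smul, Matrix.smul_vecMulVec]
      module
  have h := hW V
  unfold deepLoss at h
  rw [hV (n+1) le_rfl] at h
  have e1 : M - (chainProd d W (n+1) + (z ^ (n+1) - y ^ (n+1)) • vecMulVec (e (n+1)) (e 0))
      = (M - chainProd d W (n+1)) + (-(z ^ (n+1) - y ^ (n+1))) • vecMulVec (e (n+1)) (e 0) := by
    rw [neg_smul]; abel
  have e2 : ∑ k : Fin (n+1), frobNorm (V k.1) ^ 2
      = ∑ k : Fin (n+1), frobNorm (W k.1) ^ 2 + (n+1) * (z ^ 2 - y ^ 2) := by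
    have : ∀ k : Fin (n+1), frobNorm (V k.1) ^ 2 = frobNorm (W k.1) ^ 2 + (z ^ 2 - y ^ 2) := by
      intro k
      have hk := k.2
      simp only [V]
      rw [frob_add, trace_vmv, frob_vmv, h2 k.1 (by omega), hu _ (by omega), hu _ (by omega),
        smul_dotProduct, hu _ (by omega)]
      simp only [smul_eq_mul]; ring
    rw [Finset.sum_congr rfl (fun k _ => this k), Finset.sum_add_distrib]
    simp
    ring
  have e3 : ((M - chainProd d W (n+1))ᵀ *ᵥ e (n+1)) ⬝ᵥ e 0 = s - y ^ (n+1) := by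
    rw [transpose_sub, sub_mulVec, hP _ le_rfl, sub_dotProduct, smul_dotProduct, hu 0 (by omega), adj_dot,
      ← hs]
    simp
  rw [e1, e2, frob_add, trace_vmv, frob_vmv, hu _ le_rfl, hu 0 (by omega), e3] at h
  have e4 : lam / ((n+1 : ℕ) : ℝ) * (∑ k : Fin (n+1), frobNorm (W k.1) ^ 2 + (n+1) * (z ^ 2 - y ^ 2))
     = lam / ((n+1 : ℕ) : ℝ) * ∑ k : Fin (n+1), frobNorm (W k.1) ^ 2 + lam * (z ^ 2 - y ^ 2) := by
    push_cast; field_simp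
  rw [e4] at h
  nlinarith

lemma joint_span {n : ℕ} (N B : Matrix (Fin n) (Fin n) ℝ) (hN : Nᵀ = N) (hB : Bᵀ = B)
    (hc : N * B = B * N) (w : Fin n → ℝ)
    (h : ∀ (v : Fin n → ℝ) (μ b : ℝ), N *ᵥ v = μ • v → B *ᵥ v = b • v → v ⬝ᵥ w = 0) : w = 0 := by
  have sN : (Matrix.toEuclideanLin N).IsSymmetric :=
    Matrix.isSymmetric_toEuclideanLin_iff.2 (by rw [Matrix.IsHermitian, conjTranspose_eq_transpose_of_trivial, hN])
  have sB : (Matrix.toEuclideanLin B).IsSymmetric :=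
    Matrix.isSymmetric_toEuclideanLin_iff.2 (by rw [Matrix.IsHermitian, conjTranspose_eq_transpose_of_trivial, hB])
  have hcomm : Commute (Matrix.toEuclideanLin N) (Matrix.toEuclideanLin B) := by
    rw [Commute, SemiconjBy]
    ext v i
    simp [mulVec_mulVec, hc]
  have ht := LinearMap.IsSymmetric.iSup_iSup_eigenspace_inf_eigenspace_eq_top_of_commute sN sB hcomm
  have hall : ∀ v : EuclideanSpace ℝ (Fin n), inner ℝ v (WithLp.toLp 2 w) = 0 := by
    intro v
    have hv : v ∈ (⨆ α, ⨆ γ, Module.End.eigenspace (Matrix.toEuclideanLin N) α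
        ⊓ Module.End.eigenspace (Matrix.toEuclideanLin B) γ) := by rw [ht]; trivial
    have hle : (⨆ α, ⨆ γ, Module.End.eigenspace (Matrix.toEuclideanLin N) α
        ⊓ Module.End.eigenspace (Matrix.toEuclideanLin B) γ) ≤
        (Submodule.span ℝ {(WithLp.toLp 2 w : EuclideanSpace ℝ (Fin n))})ᗮ := by
      refine iSup_le fun α => iSup_le fun γ => ?_
      rintro x ⟨hx1, hx2⟩
      rw [SetLike.mem_coe, Module.End.mem_eigenspace_iff] at hx1 hx2
      rw [Submodule.mem_orthogonal_singleton_iff_inner_left]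
      have hx1' := congrArg (WithLp.ofLp) hx1
      have hx2' := congrArg (WithLp.ofLp) hx2
      have := h x.ofLp α γ (by simpa using hx1') (by simpa using hx2')
      rw [EuclideanSpace.inner_eq_star_dotProduct]
      simpa [dotProduct_comm] using this
    have := hle hv
    rwa [Submodule.mem_orthogonal_singleton_iff_inner_left] at this
  have h0 := hall (WithLp.toLp 2 w)
  rw [inner_self_eq_zero] at h0
  exact congrArg WithLp.ofLp h0

lemma dot_self_zero {m : ℕ} {v : Fin m → ℝ} (h : v ⬝ᵥ v = 0) : v = 0 :=
  dotProduct_self_eq_zero.1 h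

lemma exists_unit_ker {m n : ℕ} (A : Matrix (Fin m) (Fin n) ℝ) (h : A.rank < n) :
    ∃ v : Fin n → ℝ, v ⬝ᵥ v = 1 ∧ A *ᵥ v = 0 := by
  have h1 : ∃ v : Fin n → ℝ, v ≠ 0 ∧ A *ᵥ v = 0 := by
    by_contra hc
    push Not at hc
    have hinj : Function.Injective A.mulVecLin := by
      rw [injective_iff_map_eq_zero]
      intro v hv
      by_contra hne
      exact hc v hne hv
    have := LinearMap.finrank_range_of_inj hinj
    rw [Matrix.rank, this] at h
    simp at h
  obtain ⟨v, hv, hA⟩ := h1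
  have hp : 0 < v ⬝ᵥ v := by
    refine lt_of_le_of_ne ?_ (fun h => hv (dot_self_zero h.symm))
    simpa using dotProduct_star_self_nonneg v
  refine ⟨(Real.sqrt (v ⬝ᵥ v))⁻¹ • v, ?_, by rw [mulVec_smul, hA, smul_zero]⟩
  rw [smul_dotProduct, dotProduct_smul, smul_eq_mul, smul_eq_mul, ← mul_assoc, ← mul_inv,
    Real.mul_self_sqrt hp.le, inv_mul_cancel₀ hp.ne']

lemma rank_lt_of_ker {m n : ℕ} (A : Matrix (Fin m) (Fin n) ℝ) (v : Fin n → ℝ) (hv : v ≠ 0)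
    (h : A *ᵥ v = 0) : A.rank < n := by
  by_contra hc
  have h1 : A.rank = n := le_antisymm (by simpa using A.rank_le_width) (not_lt.1 hc)
  have h2 := LinearMap.finrank_range_add_finrank_ker A.mulVecLin
  rw [Matrix.rank] at h1
  rw [h1] at h2
  simp only [Module.finrank_fintype_fun_eq_card, Fintype.card_fin] at h2
  have h3 : LinearMap.ker A.mulVecLin = ⊥ := by
    rw [← Submodule.finrank_eq_zero (R := ℝ)]; omega
  have : v ∈ LinearMap.ker A.mulVecLin := h
  rw [h3] at this
  exact hv (by simpa using this)

lemma gram_shift (n : ℕ) (d : ℕ → ℕ)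
    (W : ∀ i : ℕ, Matrix (Fin (d (i + 1))) (Fin (d i)) ℝ)
    (bal : ∀ i, i < n → (W (i+1))ᵀ * W (i+1) = W i * (W i)ᵀ) (k : ℕ) (hk : k ≤ n) :
    (W k)ᵀ * W k * chainProd d W k = chainProd d W k * ((W 0)ᵀ * W 0) := by
  induction k with
  | zero => simp [chainProd]
  | succ k ih =>
    rw [bal k (by omega), chainProd, Matrix.mul_assoc (W k), Matrix.mul_assoc (W k), ← ih (by omega)]
    simp only [Matrix.mul_assoc]

lemma gram_pow (n : ℕ) (d : ℕ → ℕ)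
    (W : ∀ i : ℕ, Matrix (Fin (d (i + 1))) (Fin (d i)) ℝ)
    (bal : ∀ i, i < n → (W (i+1))ᵀ * W (i+1) = W i * (W i)ᵀ) (k : ℕ) (hk : k ≤ n + 1) :
    (chainProd d W k)ᵀ * chainProd d W k = ((W 0)ᵀ * W 0) ^ k := by
  induction k with
  | zero => simp [chainProd]
  | succ k ih =>
    rw [pow_succ, ← ih (by omega), Matrix.mul_assoc, ← gram_shift n d W bal k (by omega)]
    simp only [chainProd, transpose_mul, Matrix.mul_assoc]

lemma gram_trace (n : ℕ) (d : ℕ → ℕ)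
    (W : ∀ i : ℕ, Matrix (Fin (d (i + 1))) (Fin (d i)) ℝ)
    (bal : ∀ i, i < n → (W (i+1))ᵀ * W (i+1) = W i * (W i)ᵀ) (k : ℕ) (hk : k ≤ n) :
    trace ((W k)ᵀ * W k) = trace ((W 0)ᵀ * W 0) := by
  induction k with
  | zero => rfl
  | succ k ih => rw [bal k (by omega), trace_mul_comm, ih (by omega)]

lemma gram_rank (n : ℕ) (d : ℕ → ℕ)
    (W : ∀ i : ℕ, Matrix (Fin (d (i + 1))) (Fin (d i)) ℝ)
    (bal : ∀ i, i < n → (W (i+1))ᵀ * W (i+1) = W i * (W i)ᵀ) (k : ℕ) (hk : k ≤ n) :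
    (W k).rank = (W 0).rank := by
  induction k with
  | zero => rfl
  | succ k ih =>
    rw [← Matrix.rank_transpose_mul_self, bal k (by omega), Matrix.rank_self_mul_transpose, ih (by omega)]

lemma struct_S (n : ℕ) (lam : ℝ) (hlam : 0 < lam) (d : ℕ → ℕ)
    (M : Matrix (Fin (d (n+1))) (Fin (d 0)) ℝ)
    (W : ∀ i : ℕ, Matrix (Fin (d (i + 1))) (Fin (d i)) ℝ)
    (hW : ∀ V : ∀ i : ℕ, Matrix (Fin (d (i + 1))) (Fin (d i)) ℝ,
      deepLoss (n+1) lam d M W ≤ deepLoss (n+1) lam d M V) :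
    (chainProd d W (n+1))ᵀ * M = ((W 0)ᵀ * W 0) ^ (n+1) + (lam / (n+1)) • ((W 0)ᵀ * W 0) := by
  have h := bot_cond n lam d M W hW
  rw [Matrix.mul_sub, gram_pow n d W (balanced n lam hlam d M W hW) _ le_rfl] at h
  rw [← h]; abel

lemma struct_N (n : ℕ) (lam : ℝ) (hlam : 0 < lam) (d : ℕ → ℕ)
    (M : Matrix (Fin (d (n+1))) (Fin (d 0)) ℝ)
    (W : ∀ i : ℕ, Matrix (Fin (d (i + 1))) (Fin (d i)) ℝ)
    (hW : ∀ V : ∀ i : ℕ, Matrix (Fin (d (i + 1))) (Fin (d i)) ℝ,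
      deepLoss (n+1) lam d M W ≤ deepLoss (n+1) lam d M V) :
    (Mᵀ * M) * ((W 0)ᵀ * W 0) ^ (n+1) =
      (((W 0)ᵀ * W 0) ^ (n+1) + (lam / (n+1)) • ((W 0)ᵀ * W 0)) *
      (((W 0)ᵀ * W 0) ^ (n+1) + (lam / (n+1)) • ((W 0)ᵀ * W 0)) ∧
    Commute (Mᵀ * M) ((W 0)ᵀ * W 0) := by
  have hS := struct_S n lam hlam d M W hW
  have hP := gram_pow n d W (balanced n lam hlam d M W hW) (n+1) le_rfl
  have hT := top_cond n lam d M W hW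
  set P := chainProd d W (n+1)
  set B := (W 0)ᵀ * W 0 with hB
  set S := B ^ (n+1) + (lam / (n+1)) • B with hSd
  have hBt : Bᵀ = B := by simp [hB]
  have hSt : Sᵀ = S := by simp [hSd, transpose_pow, hBt]
  have hS' : Mᵀ * P = S := by
    have := congrArg transpose hS
    rwa [transpose_mul, transpose_transpose, hSt] at this
  have hMP : M * Pᵀ = P * Mᵀ := by
    have e : M * Pᵀ = P * Pᵀ + (lam / (n+1)) • (W n * (W n)ᵀ) := by
      rw [← hT, Matrix.sub_mul]; abel
    have e2 := congrArg transpose e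
    simp only [transpose_mul, transpose_transpose, transpose_add, transpose_smul] at e2
    rw [e, e2]
  have h1 : (Mᵀ * M) * B ^ (n+1) = S * S := by
    rw [← hP]
    calc Mᵀ * M * (Pᵀ * P) = Mᵀ * (M * Pᵀ) * P := by simp only [Matrix.mul_assoc]
      _ = (Mᵀ * P) * (Mᵀ * P) := by rw [hMP]; simp only [Matrix.mul_assoc]
      _ = S * S := by rw [hS']
  have h2 : B ^ (n+1) * (Mᵀ * M) = S * S := by
    have := congrArg transpose h1
    simpa only [transpose_mul, transpose_transpose, transpose_pow, hBt, hSt] using this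
  have h3 : (Mᵀ * M) * S = S * (Mᵀ * M) := by
    calc (Mᵀ * M) * S = Mᵀ * (M * Pᵀ) * M := by rw [← hS]; simp only [Matrix.mul_assoc]
      _ = (Mᵀ * P) * (Mᵀ * M) := by rw [hMP]; simp only [Matrix.mul_assoc]
      _ = S * (Mᵀ * M) := by rw [hS']
  refine ⟨h1, ?_⟩
  have c1 : Commute (Mᵀ * M) (S - B ^ (n+1)) := Commute.sub_right h3 (h1.trans h2.symm)
  have hc : lam / ((n:ℝ)+1) ≠ 0 := by positivity
  have e : B = (lam / ((n:ℝ)+1))⁻¹ • (S - B ^ (n+1)) := by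
    rw [hSd, add_sub_cancel_left, smul_smul, inv_mul_cancel₀ hc, one_smul]
  rw [e]
  exact c1.smul_right _

lemma pow_eig {m : ℕ} (B : Matrix (Fin m) (Fin m) ℝ) (v : Fin m → ℝ) (b : ℝ) (h : B *ᵥ v = b • v)
    (k : ℕ) : (B ^ k) *ᵥ v = b ^ k • v := by
  induction k with
  | zero => simp
  | succ k ih => rw [pow_succ, ← mulVec_mulVec, h, mulVec_smul, ih, smul_smul, pow_succ, mul_comm]

lemma dot_nonneg' {m : ℕ} (v : Fin m → ℝ) : 0 ≤ v ⬝ᵥ v := by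
  simpa using dotProduct_star_self_nonneg v

lemma gram_eig {m n : ℕ} (A : Matrix (Fin m) (Fin n) ℝ) (v : Fin n → ℝ) (b : ℝ) (hv : v ⬝ᵥ v = 1)
    (h : (Aᵀ * A) *ᵥ v = b • v) : (A *ᵥ v) ⬝ᵥ (A *ᵥ v) = b := by
  rw [← adj_dot, mulVec_mulVec, h, smul_dotProduct, hv]; simp

lemma key_unit (n : ℕ) (lam : ℝ) (hlam : 0 < lam) (d : ℕ → ℕ)
    (hdim : ∀ i : ℕ, 1 ≤ i → i ≤ n → min (d 0) (d (n+1)) ≤ d i)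
    (M : Matrix (Fin (d (n+1))) (Fin (d 0)) ℝ)
    (W : ∀ i : ℕ, Matrix (Fin (d (i + 1))) (Fin (d i)) ℝ)
    (hW : ∀ V : ∀ i : ℕ, Matrix (Fin (d (i + 1))) (Fin (d i)) ℝ,
      deepLoss (n+1) lam d M W ≤ deepLoss (n+1) lam d M V)
    (v : Fin (d 0) → ℝ) (μ b : ℝ) (hv : v ⬝ᵥ v = 1)
    (hN : (Mᵀ * M) *ᵥ v = μ • v) (hB : ((W 0)ᵀ * W 0) *ᵥ v = b • v) (z : ℝ) :
    (√μ - √b ^ (n+1)) ^ 2 + lam * √b ^ 2 ≤ (√μ - z ^ (n+1)) ^ 2 + lam * z ^ 2 := by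
  have bal := balanced n lam hlam d M W hW
  have hv0 : v ≠ 0 := by rintro rfl; simp at hv
  have hb0 : 0 ≤ b := by rw [← gram_eig _ v b hv hB]; exact dot_nonneg' _
  have hμ0 : 0 ≤ μ := by rw [← gram_eig _ v μ hv hN]; exact dot_nonneg' _
  have hSv : ((chainProd d W (n+1))ᵀ * M) *ᵥ v = (b ^ (n+1) + lam / (n+1) * b) • v := by
    rw [struct_S n lam hlam d M W hW, add_mulVec, pow_eig _ _ _ hB, smul_mulVec, hB, smul_smul,
      add_smul]
  have hc : 0 < lam / ((n:ℝ)+1) := by positivity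
  rcases hb0.eq_or_lt with rfl | hb
  · rcases hμ0.eq_or_lt with rfl | hμ
    · simp; positivity
    have hs : 0 < √μ := Real.sqrt_pos.2 hμ
    have hW0 : W 0 *ᵥ v = 0 := dot_self_zero (gram_eig _ v 0 hv hB)
    let u : Fin (d (n+1)) → ℝ := (√μ)⁻¹ • (M *ᵥ v)
    have hu1 : u ⬝ᵥ u = 1 := by
      simp only [u]
      rw [smul_dotProduct, dotProduct_smul, gram_eig _ v μ hv hN, smul_eq_mul, smul_eq_mul,
        ← mul_assoc, ← mul_inv, Real.mul_self_sqrt hμ0, inv_mul_cancel₀ hμ.ne']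
    have hu0 : u ≠ 0 := by intro h; rw [h] at hu1; simp at hu1
    have hPu : (chainProd d W (n+1))ᵀ *ᵥ u = 0 := by
      simp only [u]
      rw [mulVec_smul, mulVec_mulVec, hSv]; simp
    have hWn : (W n)ᵀ *ᵥ u = 0 := by
      have h := congrArg (fun A => A *ᵥ u) (top_cond n lam d M W hW)
      simp only [← mulVec_mulVec, hPu, mulVec_zero, smul_mulVec] at h
      have h' : W n *ᵥ (W n)ᵀ *ᵥ u = 0 := by
        rcases smul_eq_zero.1 h.symm with h | h
        · exact absurd h hc.ne'
        · exact h
      apply dot_self_zero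
      rw [adj_dot, h', dotProduct_zero]
    have r0 : (W 0).rank < d 0 := rank_lt_of_ker _ v hv0 hW0
    have rn : (W 0).rank < d (n+1) := by
      rw [← gram_rank n d W bal n le_rfl, ← Matrix.rank_transpose]
      exact rank_lt_of_ker _ u hu0 hWn
    have hex : ∀ i, ∃ w : Fin (d i) → ℝ, 1 ≤ i → i ≤ n → (w ⬝ᵥ w = 1 ∧ W i *ᵥ w = 0) := by
      intro i
      by_cases hi : 1 ≤ i ∧ i ≤ n
      · have hr : (W i).rank < d i := by
          rw [gram_rank n d W bal i hi.2]
          exact lt_of_lt_of_le (lt_min r0 rn) (hdim i hi.1 hi.2)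
        obtain ⟨w, hw⟩ := exists_unit_ker _ hr
        exact ⟨w, fun _ _ => hw⟩
      · exact ⟨0, fun h1 h2 => absurd ⟨h1, h2⟩ hi⟩
    choose g hg using hex
    let e : ∀ i, Fin (d i) → ℝ := Function.update (Function.update g 0 v) (n+1) u
    have e0 : e 0 = v := by
      simp only [e]; rw [Function.update_of_ne (by omega), Function.update_self]
    have en : e (n+1) = u := by simp only [e]; rw [Function.update_self]
    have ei : ∀ i, 1 ≤ i → i ≤ n → e i = g i := by
      intro i h1 h2
      simp only [e]; rw [Function.update_of_ne (by omega), Function.update_of_ne (by omega)]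
    have key := perturb n lam d M W hW e 0 z (√μ) ?_ ?_ ?_ ?_
    · simpa using key
    · intro i hi
      rcases Nat.eq_zero_or_pos i with rfl | h0
      · rw [e0, hv]
      rcases hi.eq_or_lt with rfl | h1
      · rw [en, hu1]
      · rw [ei i h0 (by omega)]; exact (hg i h0 (by omega)).1
    · intro i hi
      rw [zero_smul]
      rcases Nat.eq_zero_or_pos i with rfl | h0
      · rw [e0, hW0]
      · rw [ei i h0 hi]; exact (hg i h0 hi).2
    · intro i hi
      rw [zero_smul]
      rcases hi.eq_or_lt with rfl | h1
      · rw [en, hWn]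
      · rw [ei (i+1) (by omega) (by omega)]
        have h := (hg (i+1) (by omega) (by omega)).2
        apply dot_self_zero
        rw [adj_dot, mulVec_mulVec, ← bal i h1, ← mulVec_mulVec, h, mulVec_zero, dotProduct_zero]
    · rw [en, e0]
      simp only [u]
      rw [smul_dotProduct, gram_eig _ v μ hv hN, smul_eq_mul]
      rw [eq_comm, inv_mul_eq_iff_eq_mul₀ hs.ne', Real.mul_self_sqrt hμ0]
  · have hy : 0 < √b := Real.sqrt_pos.2 hb
    have hy2 : √b ^ 2 = b := Real.sq_sqrt hb0
    set y := √b with hyd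
    have hyk : ∀ k, y ^ k ≠ 0 := fun k => (pow_pos hy k).ne'
    have hg : ∀ k, k ≤ n → (W k)ᵀ *ᵥ (W k *ᵥ (chainProd d W k *ᵥ v)) = b • (chainProd d W k *ᵥ v) := by
      intro k hk
      have := congrArg (fun A => A *ᵥ v) (gram_shift n d W bal k hk)
      simp only [← mulVec_mulVec] at this
      rw [this, mulVec_mulVec v, hB, mulVec_smul]
    let e : ∀ i, Fin (d i) → ℝ := fun i => (y ^ i)⁻¹ • (chainProd d W i *ᵥ v)
    refine perturb n lam d M W hW e y z (√μ) ?_ ?_ ?_ ?_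
    · intro i hi
      simp only [e]
      rw [smul_dotProduct, dotProduct_smul, ← adj_dot, mulVec_mulVec, gram_pow n d W bal i hi,
        pow_eig _ _ _ hB, smul_dotProduct, hv, ← hy2]
      simp only [smul_eq_mul]
      have := hyk i
      field_simp
      ring
    · intro i hi
      simp only [e]
      rw [mulVec_smul, mulVec_mulVec, smul_smul, chainProd]
      congr 1
      have := hyk i
      rw [pow_succ]; field_simp
    · intro i hi
      simp only [e]
      rw [mulVec_smul, chainProd, ← mulVec_mulVec, hg i hi, smul_smul, smul_smul, ← hy2]
      congr 1
      have := hyk i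
      rw [pow_succ]; field_simp
    · have e0 : e 0 = v := by simp [e, chainProd]
      have hd : (chainProd d W (n+1) *ᵥ v) ⬝ᵥ (M *ᵥ v) = b ^ (n+1) + lam / (n+1) * b := by
        rw [dotProduct_comm, ← transpose_transpose (chainProd d W (n+1)),
          ← adj_dot, transpose_transpose, mulVec_mulVec]
        rw [hSv, smul_dotProduct, hv]; simp
      rw [e0]
      simp only [e]
      rw [smul_dotProduct, hd, smul_eq_mul]
      have hS2 := hSv
      rw [struct_S n lam hlam d M W hW] at hS2
      have hN2 := congrArg (fun A => v ⬝ᵥ (A *ᵥ v)) (struct_N n lam hlam d M W hW).1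
      beta_reduce at hN2
      rw [← mulVec_mulVec v, ← mulVec_mulVec v, hS2, mulVec_smul, hS2, pow_eig _ _ _ hB, mulVec_smul,
        hN, dotProduct_smul, dotProduct_smul, dotProduct_smul, dotProduct_smul, hv] at hN2
      simp only [smul_eq_mul, mul_one] at hN2
      apply (Real.sqrt_eq_iff_eq_sq hμ0 (by positivity)).2
      have e3 : (y ^ (n+1)) ^ 2 = b ^ (n+1) := by rw [← hy2]; ring
      rw [mul_pow, inv_pow, e3, eq_inv_mul_iff_mul_eq₀ (by positivity)]
      linarith

lemma sv_exists {m n : ℕ} (A : Matrix (Fin m) (Fin n) ℝ) (v : Fin n → ℝ) (hv : v ≠ 0) (μ : ℝ)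
    (hμ : 0 < μ) (h : (Aᵀ * A) *ᵥ v = μ • v) : ∃ i, singularValue A i = √μ := by
  set hA := Matrix.isHermitian_conjTranspose_mul_self A with hAd
  have hj : ∃ j, hA.eigenvalues j = μ := by
    have : μ ∈ spectrum ℝ (Aᴴ * A) := by
      rw [← Matrix.spectrum_toLin']
      apply Module.End.HasEigenvalue.mem_spectrum
      apply Module.End.hasEigenvalue_of_hasEigenvector (x := v)
      refine ⟨?_, hv⟩
      rw [Module.End.mem_eigenspace_iff, Matrix.toLin'_apply, conjTranspose_eq_transpose_of_trivial, h]
    rw [hA.spectrum_real_eq_range_eigenvalues] at this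
    exact this
  obtain ⟨j, hj⟩ := hj
  set ev : Fin n → ℝ := fun j => Real.sqrt (hA.eigenvalues j) with hev
  set σ := Tuple.sort ev with hσ
  have hmono : Monotone (ev ∘ σ) := Tuple.monotone_sort ev
  set k := σ.symm j with hk
  have hkv : (ev ∘ σ) k = √μ := by
    show ev (σ (σ.symm j)) = √μ
    rw [σ.apply_symm_apply]
    show √(hA.eigenvalues j) = √μ
    rw [hj]
  have hlt : k.rev.1 < min m n := by
    by_contra hc
    have h1 : m ≤ k.rev.1 := by have := k.rev.2; omega
    have hr : (Aᴴ * A).rank ≤ m := by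
      rw [conjTranspose_eq_transpose_of_trivial, Matrix.rank_transpose_mul_self]
      simpa using A.rank_le_height
    rw [hA.rank_eq_card_non_zero_eigs, Fintype.card_subtype] at hr
    have h2 : (Finset.Ici k).card ≤ (Finset.univ.filter fun i => hA.eigenvalues i ≠ 0).card := by
      apply Finset.card_le_card_of_injOn σ
      · intro i hi
        have hi' : k ≤ i := by simpa using hi
        have := hmono hi'
        rw [hkv] at this
        have hp : 0 < ev (σ i) := lt_of_lt_of_le (Real.sqrt_pos.2 hμ) this
        have : 0 < hA.eigenvalues (σ i) := Real.sqrt_pos.1 hp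
        simpa using this.ne'
      · exact σ.injective.injOn
    rw [Fin.card_Ici] at h2
    have := k.2
    rw [Fin.val_rev] at h1
    omega
  refine ⟨⟨k.rev.1, hlt⟩, ?_⟩
  unfold singularValue
  have : (Fin.castLE (Nat.min_le_right m n) ⟨k.rev.1, hlt⟩).rev = k := by
    ext; simp [Fin.val_rev]; omega
  simp only [this]
  exact hkv

lemma gram_unique (n : ℕ) (hn : 2 ≤ n) (lam : ℝ) (hlam : 0 < lam) (q τ : ℝ)
    (hq : q = 2 / ((n:ℝ)+1))
    (hτ : τ = (1 - q / 2) * lam ^ (1 / (2 - q)) * (1 - q) ^ ((q - 1) / (2 - q)))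
    (d : ℕ → ℕ)
    (hdim : ∀ i : ℕ, 1 ≤ i → i ≤ n → min (d 0) (d (n+1)) ≤ d i)
    (M : Matrix (Fin (d (n+1))) (Fin (d 0)) ℝ)
    (hσ : ∀ i : Fin (min (d (n+1)) (d 0)), singularValue M i ≠ τ)
    (W W' : ∀ i : ℕ, Matrix (Fin (d (i + 1))) (Fin (d i)) ℝ)
    (hW : ∀ V : ∀ i : ℕ, Matrix (Fin (d (i + 1))) (Fin (d i)) ℝ,
      deepLoss (n+1) lam d M W ≤ deepLoss (n+1) lam d M V)
    (hW' : ∀ V : ∀ i : ℕ, Matrix (Fin (d (i + 1))) (Fin (d i)) ℝ,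
      deepLoss (n+1) lam d M W' ≤ deepLoss (n+1) lam d M V) :
    (W 0)ᵀ * W 0 = (W' 0)ᵀ * W' 0 := by
  have hcomm := (struct_N n lam hlam d M W hW).2
  have hcomm' := (struct_N n lam hlam d M W' hW').2
  have hτ0 : 0 < τ := by
    have hn' : (2:ℝ) ≤ n := by exact_mod_cast hn
    have hq1 : q < 1 := by rw [hq, div_lt_one (by positivity)]; linarith
    rw [hτ]
    have : 0 < 1 - q := by linarith
    have : 0 < 1 - q / 2 := by linarith
    positivity
  have hNt : (Mᵀ * M)ᵀ = Mᵀ * M := by simp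
  have main : ∀ (v w : Fin (d 0) → ℝ) (μ b μ' b' : ℝ), v ≠ 0 → w ≠ 0 →
      (Mᵀ * M) *ᵥ v = μ • v → ((W 0)ᵀ * W 0) *ᵥ v = b • v →
      (Mᵀ * M) *ᵥ w = μ' • w → ((W' 0)ᵀ * W' 0) *ᵥ w = b' • w → μ = μ' → b = b' := by
    intro v w μ b μ' b' hv hw h1 h2 h3 h4 hμ
    subst hμ
    have nrm : ∀ (x : Fin (d 0) → ℝ), x ≠ 0 → ∃ a : ℝ, (a • x) ⬝ᵥ (a • x) = 1 := by
      intro x hx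
      have hp : 0 < x ⬝ᵥ x := lt_of_le_of_ne (dot_nonneg' x) (fun h => hx (dot_self_zero h.symm))
      refine ⟨(√(x ⬝ᵥ x))⁻¹, ?_⟩
      rw [smul_dotProduct, dotProduct_smul, smul_eq_mul, smul_eq_mul, ← mul_assoc, ← mul_inv,
        Real.mul_self_sqrt hp.le, inv_mul_cancel₀ hp.ne']
    have sc : ∀ (A : Matrix (Fin (d 0)) (Fin (d 0)) ℝ) (x : Fin (d 0) → ℝ) (a c : ℝ), A *ᵥ x = c • x →
        A *ᵥ (a • x) = c • (a • x) := by
      intro A x a c h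
      rw [mulVec_smul, h, smul_comm]
    obtain ⟨a, ha⟩ := nrm v hv
    obtain ⟨a', ha'⟩ := nrm w hw
    have k1 := key_unit n lam hlam d hdim M W hW _ μ b ha (sc _ _ _ _ h1) (sc _ _ _ _ h2)
    have k2 := key_unit n lam hlam d hdim M W' hW' _ μ b' ha' (sc _ _ _ _ h3) (sc _ _ _ _ h4)
    have hs : √μ ≠ τ := by
      intro hs
      have hμ : 0 < μ := by
        by_contra hc
        rw [Real.sqrt_eq_zero_of_nonpos (not_lt.1 hc)] at hs
        linarith
      obtain ⟨i, hi⟩ := sv_exists M v hv μ hμ h1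
      exact hσ i (hi.trans hs)
    have hb := gram_eig _ _ b ha (sc _ _ _ _ h2)
    have hb' := gram_eig _ _ b' ha' (sc _ _ _ _ h4)
    have hb0 : 0 ≤ b := by rw [← hb]; exact dot_nonneg' _
    have hb0' : 0 ≤ b' := by rw [← hb']; exact dot_nonneg' _
    have := scalar_unique n hn lam (√μ) τ q (√b) (√b') hlam (Real.sqrt_nonneg _) (Real.sqrt_nonneg _)
      hq hτ hs (fun x _ => k1 x) (fun x _ => k2 x)
    exact (Real.sqrt_inj hb0 hb0').1 this
  set N := Mᵀ * M with hN
  set B := (W 0)ᵀ * W 0 with hB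
  set B' := (W' 0)ᵀ * W' 0 with hB'
  have hBt : Bᵀ = B := by simp [hB]
  have hBt' : B'ᵀ = B' := by simp [hB']
  have sym : ∀ (A : Matrix (Fin (d 0)) (Fin (d 0)) ℝ), Aᵀ = A → ∀ x y : Fin (d 0) → ℝ,
      x ⬝ᵥ (A *ᵥ y) = (A *ᵥ x) ⬝ᵥ y := by
    intro A hA x y
    rw [← adj_dot, hA]
  have step : ∀ (v : Fin (d 0) → ℝ) (μ b : ℝ), N *ᵥ v = μ • v → B *ᵥ v = b • v → (B - B') *ᵥ v = 0 := by
    intro v μ b h1 h2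
    by_cases hv : v = 0
    · rw [hv, mulVec_zero]
    apply joint_span N B' hNt hBt' hcomm'
    intro w μ' b' h3 h4
    by_cases hw : w = 0
    · rw [hw, zero_dotProduct]
    rw [sub_mulVec, dotProduct_sub, h2, sym B' hBt', h4, dotProduct_smul, smul_dotProduct,
      smul_eq_mul, smul_eq_mul, ← sub_mul]
    by_cases hμ : μ = μ'
    · rw [main v w μ b μ' b' hv hw h1 h2 h3 h4 hμ]; simp
    · have h5 := sym N hNt w v
      rw [h1, h3, dotProduct_smul, smul_dotProduct, smul_eq_mul, smul_eq_mul] at h5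
      have h6 : (μ - μ') * (w ⬝ᵥ v) = 0 := by rw [sub_mul, h5, sub_self]
      rcases mul_eq_zero.1 h6 with h | h
      · exact absurd (sub_eq_zero.1 h) hμ
      · rw [h, mul_zero]
  have hall : ∀ u, (B - B') *ᵥ u = 0 := by
    intro u
    apply joint_span N B hNt hBt hcomm
    intro v μ b h1 h2
    rw [sym (B - B') (by rw [transpose_sub, hBt, hBt']), step v μ b h1 h2, zero_dotProduct]
  rw [← sub_eq_zero]
  apply Matrix.mulVec_injective
  funext u
  rw [hall u]; simp

/-- If no singular value of `M♮` equals the threshold `τ`, then the Frobenius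
norm of each layer is the same across all global minimizers of the
ℓ²-regularized deep matrix factorization objective: for any two global
minimizers `W`, `W'` and any layer indices `i`, `j`, `‖W_i‖_F = ‖W'_j‖_F`. -/
theorem stmt9 (L : ℕ) (hL : 3 ≤ L) (lam : ℝ) (hlam : 0 < lam) (q τ : ℝ)
    (hq : q = 2 / L)
    (hτ : τ = (1 - q / 2) * lam ^ (1 / (2 - q)) * (1 - q) ^ ((q - 1) / (2 - q)))
    (d : ℕ → ℕ)
    (hdim : ∀ i : ℕ, 1 ≤ i → i ≤ L - 1 → min (d 0) (d L) ≤ d i)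
    (Mnat : Matrix (Fin (d L)) (Fin (d 0)) ℝ)
    (hσ : ∀ i : Fin (min (d L) (d 0)), singularValue Mnat i ≠ τ)
    (W W' : ∀ i : ℕ, Matrix (Fin (d (i + 1))) (Fin (d i)) ℝ)
    (hW : ∀ V : ∀ i : ℕ, Matrix (Fin (d (i + 1))) (Fin (d i)) ℝ,
      deepLoss L lam d Mnat W ≤ deepLoss L lam d Mnat V)
    (hW' : ∀ V : ∀ i : ℕ, Matrix (Fin (d (i + 1))) (Fin (d i)) ℝ,
      deepLoss L lam d Mnat W' ≤ deepLoss L lam d Mnat V)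
    (i j : Fin L) :
    frobNorm (W i.1) = frobNorm (W' j.1) := by
  obtain ⟨n, rfl⟩ : ∃ n, L = n + 1 := ⟨L - 1, by omega⟩
  have hB := gram_unique n (by omega) lam hlam q τ (by rw [hq]; push_cast; rfl) hτ d
    (fun i h1 h2 => hdim i h1 (by omega)) Mnat hσ W W' hW hW'
  have e1 := gram_trace n d W (balanced n lam hlam d Mnat W hW) i.1 (by have := i.2; omega)
  have e2 := gram_trace n d W' (balanced n lam hlam d Mnat W' hW') j.1 (by have := j.2; omega)
  rw [← frob_sq] at e1 e2
  rw [hB, ← e2] at e1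
  have p1 : 0 ≤ frobNorm (W i.1) := Real.sqrt_nonneg _
  have p2 : 0 ≤ frobNorm (W' j.1) := Real.sqrt_nonneg _
  exact (sq_eq_sq₀ p1 p2).1 e1
end

section
/- Let L ≥ 3 be an integer, q := 2/L, and let M♮ ∈ ℝ^{d_L × d_0}. Suppose min_{1 ≤ i ≤ L−1} d_i ≥ min{d_0, d_L}, and suppose the regularization parameter satisfies λ > ( σ_1(M♮) / ( (1 − q/2)·(1 − q)^{(q−1)/(2−q)} ) )^{2−q}, where σ_1(M♮) is the largest singular value of M♮. Then for every global minimizer (W*_1, …, W*_L) of the objective 𝓛(W_1, …, W_L) := ‖M♮ − W_L···W_1‖_F² + (λ/L)·Σ_{i=1}^L ‖W_i‖_F² with W_i ∈ ℝ^{d_i × d_{i−1}}, the end-to-end product satisfies W*_L·W*_{L−1}···W*_1 = 0. -/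
open Matrix

lemma aux_scalar (q s lam x : ℝ) (hq0 : 0 < q) (hq1 : q < 1) (hs : 0 ≤ s) (hx : 0 < x)
    (hlam : (s / ((1 - q / 2) * (1 - q) ^ ((q - 1) / (2 - q)))) ^ (2 - q) < lam) :
    0 < x ^ 2 - 2 * s * x + lam * x ^ q := by
  have h2 : 0 < 2 - q := by linarith
  have h1 : 0 < 1 - q := by linarith
  set c := (1 - q) ^ ((q - 1) / (2 - q)) with hc
  have hcpos : 0 < c := Real.rpow_pos_of_pos h1 _
  have hden : 0 < (1 - q / 2) * c := mul_pos (by linarith) hcpos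
  have hlampos : 0 < lam := lt_of_le_of_lt (Real.rpow_nonneg (div_nonneg hs hden.le) _) hlam
  have hroot : s / ((1 - q / 2) * c) < lam ^ (1 / (2 - q)) := by
    have := Real.rpow_lt_rpow (Real.rpow_nonneg (div_nonneg hs hden.le) _) hlam
      (one_div_pos.mpr h2)
    rwa [← Real.rpow_mul (div_nonneg hs hden.le), mul_one_div_cancel h2.ne', Real.rpow_one] at this
  rw [div_lt_iff₀ hden] at hroot
  have hxq : 0 < x ^ (q - 1) := Real.rpow_pos_of_pos hx _
  have am := Real.geom_mean_le_arith_mean2_weighted (w₁ := (1 - q) / (2 - q)) (w₂ := 1 / (2 - q))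
    (p₁ := x * (2 - q) / (1 - q)) (p₂ := lam * x ^ (q - 1) * (2 - q)) (by positivity) (by positivity)
    (by positivity) (by positivity) (by field_simp; ring)
  have e1 : (x * (2 - q) / (1 - q)) ^ ((1 - q) / (2 - q)) * (lam * x ^ (q - 1) * (2 - q)) ^ (1 / (2 - q))
      = (2 - q) * c * lam ^ (1 / (2 - q)) := by
    rw [Real.div_rpow (by positivity) h1.le, Real.mul_rpow hx.le h2.le,
      Real.mul_rpow (by positivity) h2.le, Real.mul_rpow hlampos.le hxq.le, ← Real.rpow_mul hx.le]
    have a1 : x ^ ((1 - q) / (2 - q)) * x ^ ((q - 1) * (1 / (2 - q))) = 1 := by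
      rw [← Real.rpow_add hx]
      have : (1 - q) / (2 - q) + (q - 1) * (1 / (2 - q)) = 0 := by field_simp; ring
      rw [this, Real.rpow_zero]
    have a2 : (2 - q) ^ ((1 - q) / (2 - q)) * (2 - q) ^ (1 / (2 - q)) = 2 - q := by
      rw [← Real.rpow_add h2]
      have : (1 - q) / (2 - q) + 1 / (2 - q) = 1 := by field_simp; ring
      rw [this, Real.rpow_one]
    have a3 : c * (1 - q) ^ ((1 - q) / (2 - q)) = 1 := by
      rw [hc, ← Real.rpow_add h1]
      have : (q - 1) / (2 - q) + (1 - q) / (2 - q) = 0 := by field_simp; ring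
      rw [this, Real.rpow_zero]
    have a4 : 0 < (1 - q) ^ ((1 - q) / (2 - q)) := Real.rpow_pos_of_pos h1 _
    rw [div_mul_eq_mul_div, div_eq_iff a4.ne']
    linear_combination (lam ^ (1 / (2 - q)) * ((2 - q) ^ ((1 - q) / (2 - q)) * (2 - q) ^ (1 / (2 - q)))) * a1
      + lam ^ (1 / (2 - q)) * a2 - (2 - q) * lam ^ (1 / (2 - q)) * a3
  have e2 : (1 - q) / (2 - q) * (x * (2 - q) / (1 - q)) + 1 / (2 - q) * (lam * x ^ (q - 1) * (2 - q))
      = x + lam * x ^ (q - 1) := by field_simp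
  rw [e1, e2] at am
  have hxx : x ^ q = x ^ (q - 1) * x := by
    rw [← Real.rpow_add_one hx.ne']; congr 1; ring
  rw [hxx]
  have : 0 < x + lam * x ^ (q - 1) - 2 * s := by linarith
  have := mul_pos hx this
  nlinarith

lemma aux_frob {m n : ℕ} (A : Matrix (Fin m) (Fin n) ℝ) :
    frobNorm A ^ 2 = (Aᵀ * A).trace := by
  rw [frobNorm, Real.sq_sqrt (by positivity), Finset.sum_comm]
  simp [Matrix.trace, Matrix.mul_apply, sq]

lemma aux_trace_nonneg {m n : ℕ} (A : Matrix (Fin m) (Fin n) ℝ) : 0 ≤ (Aᵀ * A).trace := by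
  rw [← aux_frob]; positivity

lemma aux_trace_zero {m n : ℕ} (A : Matrix (Fin m) (Fin n) ℝ) (h : (Aᵀ * A).trace = 0) : A = 0 := by
  have := (Matrix.trace_conjTranspose_mul_self_eq_zero_iff (A := A)).1
  rw [Matrix.conjTranspose_eq_transpose_of_trivial] at this
  exact this h

lemma aux_quad (a b : ℝ) (h : ∀ e : ℝ, 0 ≤ a * e ^ 2 + b * e) : b = 0 := by
  have ha : 0 ≤ a := by
    have h1 := h 1
    have h2 := h (-1)
    nlinarith
  have h1 := h (-b / (a + 1))
  have h3 : a * (-b / (a + 1)) ^ 2 + b * (-b / (a + 1)) = - b ^ 2 / (a + 1) ^ 2 := by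
    field_simp; ring
  rw [h3, neg_div] at h1
  have : b ^ 2 / (a + 1) ^ 2 = 0 := le_antisymm (by linarith) (by positivity)
  rw [div_eq_zero_iff] at this
  rcases this with h | h
  · exact pow_eq_zero_iff (two_ne_zero) |>.1 h
  · nlinarith

lemma aux_stat {m p r n : ℕ} (c : ℝ) (N : Matrix (Fin m) (Fin n) ℝ) (A : Matrix (Fin m) (Fin p) ℝ)
    (W : Matrix (Fin p) (Fin r) ℝ) (B : Matrix (Fin r) (Fin n) ℝ)
    (h : ∀ V : Matrix (Fin p) (Fin r) ℝ, frobNorm (N - A * (W * B)) ^ 2 + c * frobNorm W ^ 2 ≤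
      frobNorm (N - A * (V * B)) ^ 2 + c * frobNorm V ^ 2) :
    c • W = Aᵀ * (N - A * (W * B)) * Bᵀ := by
  set R := N - A * (W * B) with hR
  set X := c • W - Aᵀ * R * Bᵀ with hX
  set Y := A * (X * B) with hY
  have ht : (Rᵀ * Y).trace = ((Aᵀ * R * Bᵀ)ᵀ * X).trace := by
    rw [hY, ← Matrix.mul_assoc, ← Matrix.mul_assoc, Matrix.trace_mul_comm]
    simp only [Matrix.transpose_mul, Matrix.transpose_transpose, Matrix.mul_assoc]
  have sym : ∀ {a b : ℕ} (P Q : Matrix (Fin a) (Fin b) ℝ), (Pᵀ * Q).trace = (Qᵀ * P).trace := by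
    intro a b P Q
    rw [← Matrix.trace_transpose, Matrix.transpose_mul, Matrix.transpose_transpose]
  have hb := aux_quad ((Yᵀ * Y).trace + c * (Xᵀ * X).trace)
    (2 * (c * (Wᵀ * X).trace - (Rᵀ * Y).trace)) (by
      intro e
      have h1 := h (W + e • X)
      have h2 : N - A * ((W + e • X) * B) = R - e • Y := by
        rw [hR, hY, Matrix.add_mul, Matrix.mul_add, Matrix.smul_mul, Matrix.mul_smul]; abel
      rw [h2] at h1
      simp only [aux_frob, Matrix.transpose_add, Matrix.transpose_sub, Matrix.transpose_smul,
        Matrix.add_mul, Matrix.mul_add, Matrix.sub_mul, Matrix.mul_sub, Matrix.smul_mul,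
        Matrix.mul_smul, Matrix.trace_add, Matrix.trace_sub, Matrix.trace_smul, smul_eq_mul] at h1
      rw [sym Y R, sym X W] at h1
      nlinarith)
  have h0 : (Xᵀ * X).trace = 0 := by
    have : (Xᵀ * X).trace = c * (Wᵀ * X).trace - ((Aᵀ * R * Bᵀ)ᵀ * X).trace := by
      conv_lhs => rw [hX, Matrix.transpose_sub, Matrix.sub_mul, Matrix.trace_sub,
        Matrix.transpose_smul, Matrix.smul_mul, Matrix.trace_smul, smul_eq_mul, ← hX]
    rw [this, ← ht]; linarith
  exact sub_eq_zero.1 (aux_trace_zero X h0)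

lemma aux_suffix (d : ℕ → ℕ) (W : ∀ i : ℕ, Matrix (Fin (d (i + 1))) (Fin (d i)) ℝ) (k n : ℕ)
    (hkn : k ≤ n) : ∃ A : Matrix (Fin (d n)) (Fin (d k)) ℝ,
      ∀ V : ∀ i : ℕ, Matrix (Fin (d (i + 1))) (Fin (d i)) ℝ, (∀ i, k ≤ i → V i = W i) →
        chainProd d V n = A * chainProd d V k := by
  induction n, hkn using Nat.le_induction with
  | base => exact ⟨1, fun V _ => by simp⟩
  | succ n hn ih =>
    obtain ⟨A, hA⟩ := ih
    refine ⟨W n * A, fun V hV => ?_⟩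
    rw [chainProd, hA V hV, hV n hn, Matrix.mul_assoc]

lemma aux_prefix (d : ℕ → ℕ) (V W : ∀ i : ℕ, Matrix (Fin (d (i + 1))) (Fin (d i)) ℝ) (k : ℕ)
    (h : ∀ i, i < k → V i = W i) : chainProd d V k = chainProd d W k := by
  induction k with
  | zero => rfl
  | succ k ih =>
    rw [chainProd, chainProd, h k (by omega), ih (fun i hi => h i (by omega))]

/-- stationarity in layer `k`. -/
lemma aux_layer (L : ℕ) (lam : ℝ) (d : ℕ → ℕ)
    (Mnat : Matrix (Fin (d L)) (Fin (d 0)) ℝ)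
    (W : ∀ i : ℕ, Matrix (Fin (d (i + 1))) (Fin (d i)) ℝ)
    (hW : ∀ V : ∀ i : ℕ, Matrix (Fin (d (i + 1))) (Fin (d i)) ℝ,
      deepLoss L lam d Mnat W ≤ deepLoss L lam d Mnat V) (k : ℕ) (hk : k < L)
    (A : Matrix (Fin (d L)) (Fin (d (k + 1))) ℝ)
    (hA : ∀ V : ∀ i : ℕ, Matrix (Fin (d (i + 1))) (Fin (d i)) ℝ, (∀ i, k + 1 ≤ i → V i = W i) →
        chainProd d V L = A * chainProd d V (k + 1)) :
    (lam / L) • W k = Aᵀ * (Mnat - chainProd d W L) * (chainProd d W k)ᵀ := by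
  have e := hA W (fun _ _ => rfl)
  rw [chainProd] at e
  rw [e]
  apply aux_stat
  intro Y
  have h := hW (Function.update W k Y)
  unfold deepLoss at h
  have e2 : chainProd d (Function.update W k Y) L = A * (Y * chainProd d W k) := by
    rw [hA _ (fun i hi => Function.update_of_ne (by omega) _ _), chainProd,
      Function.update_self, aux_prefix d _ W k (fun i hi => Function.update_of_ne (by omega) _ _)]
  rw [e, e2, ← Finset.add_sum_erase _ _ (Finset.mem_univ (⟨k, hk⟩ : Fin L)),
    ← Finset.add_sum_erase _ _ (Finset.mem_univ (⟨k, hk⟩ : Fin L))] at h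
  have e3 : ∑ x ∈ Finset.univ.erase (⟨k, hk⟩ : Fin L), frobNorm (Function.update W k Y x.1) ^ 2 =
      ∑ x ∈ Finset.univ.erase (⟨k, hk⟩ : Fin L), frobNorm (W x.1) ^ 2 := by
    refine Finset.sum_congr rfl fun x hx => ?_
    rw [Function.update_of_ne]
    intro hxk
    exact (Finset.mem_erase.1 hx).1 (Fin.ext hxk)
  rw [e3] at h
  simp only [Function.update_self, mul_add] at h
  linarith

lemma aux_balanced (L : ℕ) (lam : ℝ) (hlam : 0 < lam) (d : ℕ → ℕ)
    (Mnat : Matrix (Fin (d L)) (Fin (d 0)) ℝ)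
    (W : ∀ i : ℕ, Matrix (Fin (d (i + 1))) (Fin (d i)) ℝ)
    (hW : ∀ V : ∀ i : ℕ, Matrix (Fin (d (i + 1))) (Fin (d i)) ℝ,
      deepLoss L lam d Mnat W ≤ deepLoss L lam d Mnat V) (k : ℕ) (hk : k + 1 < L) :
    (W (k + 1))ᵀ * W (k + 1) = W k * (W k)ᵀ := by
  obtain ⟨A, hA⟩ := aux_suffix d W (k + 2) L (by omega)
  have h1 := aux_layer L lam d Mnat W hW (k + 1) hk A hA
  have h0 := aux_layer L lam d Mnat W hW k (by omega) (A * W (k + 1)) (by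
    intro V hV
    rw [hA V (fun i hi => hV i (by omega)), chainProd, hV (k + 1) le_rfl, Matrix.mul_assoc])
  have hc : lam / L ≠ 0 := by
    have : (0 : ℝ) < L := by exact_mod_cast (by omega : 0 < L)
    positivity
  have : (lam / L) • ((W (k + 1))ᵀ * W (k + 1)) = (lam / L) • (W k * (W k)ᵀ) := by
    rw [← Matrix.mul_smul, h1]
    have h0' := congrArg (fun Z => Z * (W k)ᵀ) h0
    simp only [Matrix.smul_mul] at h0'
    rw [h0', chainProd]
    simp only [Matrix.transpose_mul, Matrix.mul_assoc]
  exact smul_right_injective _ hc this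

lemma aux_spec {n : ℕ} (S : Matrix (Fin n) (Fin n) ℝ) (hS : S.IsHermitian) :
    ∃ P : Matrix (Fin n) (Fin n) ℝ, Pᵀ * P = 1 ∧ P * Pᵀ = 1 ∧
      S = P * Matrix.diagonal hS.eigenvalues * Pᵀ := by
  refine ⟨(hS.eigenvectorUnitary : Matrix (Fin n) (Fin n) ℝ), ?_, ?_, ?_⟩
  · have := Unitary.coe_star_mul_self hS.eigenvectorUnitary
    rwa [Matrix.star_eq_conjTranspose, Matrix.conjTranspose_eq_transpose_of_trivial] at this
  · have : (hS.eigenvectorUnitary : Matrix (Fin n) (Fin n) ℝ) *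
        star (hS.eigenvectorUnitary : Matrix (Fin n) (Fin n) ℝ) = 1 :=
      Unitary.coe_mul_star_self hS.eigenvectorUnitary
    rwa [Matrix.star_eq_conjTranspose, Matrix.conjTranspose_eq_transpose_of_trivial] at this
  · have := hS.spectral_theorem
    rw [Unitary.conjStarAlgAut_apply, Matrix.star_eq_conjTranspose,
      Matrix.conjTranspose_eq_transpose_of_trivial] at this
    exact this

lemma aux_sv {m n : ℕ} (A : Matrix (Fin m) (Fin n) ℝ) (hm : 0 < m) (hn : 0 < n) (j : Fin n) :
    (Matrix.isHermitian_conjTranspose_mul_self A).eigenvalues j ≤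
      singularValue A ⟨0, lt_min hm hn⟩ ^ 2 := by
  set ev : Fin n → ℝ :=
    fun j => Real.sqrt ((Matrix.isHermitian_conjTranspose_mul_self A).eigenvalues j) with hev
  have h1 : ev j ≤ singularValue A ⟨0, lt_min hm hn⟩ := by
    have hmono := Tuple.monotone_sort ev
    have := hmono (a := (Tuple.sort ev).symm j)
      (b := (Fin.castLE (Nat.min_le_right m n) ⟨0, lt_min hm hn⟩).rev) (by
        rw [Fin.le_def, Fin.val_rev]
        simp
        omega)
    rw [Function.comp_apply, Equiv.apply_symm_apply] at this
    exact this
  have h0 : 0 ≤ (Matrix.isHermitian_conjTranspose_mul_self A).eigenvalues j :=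
    (Matrix.posSemidef_conjTranspose_mul_self A).eigenvalues_nonneg j
  rw [← Real.sq_sqrt h0]
  exact pow_le_pow_left₀ (Real.sqrt_nonneg _) h1 2

lemma aux_sv_nonneg {m n : ℕ} (A : Matrix (Fin m) (Fin n) ℝ) (i) : 0 ≤ singularValue A i :=
  Real.sqrt_nonneg _

lemma aux_col {m n : ℕ} (A : Matrix (Fin m) (Fin n) ℝ) (hm : 0 < m) (hn : 0 < n)
    (P : Matrix (Fin n) (Fin n) ℝ) (hP : Pᵀ * P = 1) (j : Fin n) :
    ((A * P)ᵀ * (A * P)) j j ≤ singularValue A ⟨0, lt_min hm hn⟩ ^ 2 := by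
  obtain ⟨Q, hQ, hQ', hA⟩ := aux_spec _ (Matrix.isHermitian_conjTranspose_mul_self A)
  replace hA : Aᵀ * A = Q * Matrix.diagonal
      (Matrix.isHermitian_conjTranspose_mul_self A).eigenvalues * Qᵀ := hA
  set e := (Matrix.isHermitian_conjTranspose_mul_self A).eigenvalues with he
  set s := singularValue A ⟨0, lt_min hm hn⟩
  have e1 : (A * P)ᵀ * (A * P) = (Qᵀ * P)ᵀ * (Matrix.diagonal e * (Qᵀ * P)) := by
    have : (A * P)ᵀ * (A * P) = Pᵀ * (Aᵀ * A) * P := by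
      simp only [Matrix.transpose_mul, Matrix.mul_assoc]
    rw [this, hA]
    simp only [Matrix.transpose_mul, Matrix.mul_assoc, Matrix.transpose_transpose]
  have e2 : (Qᵀ * P)ᵀ * (Qᵀ * P) = 1 := by
    rw [Matrix.transpose_mul, Matrix.transpose_transpose, Matrix.mul_assoc, ← Matrix.mul_assoc Q,
      hQ', Matrix.one_mul, hP]
  have e3 := congrFun (congrFun e2 j) j
  rw [e1]
  generalize Qᵀ * P = O at *
  rw [Matrix.mul_apply, Matrix.one_apply_eq] at e3
  rw [Matrix.mul_apply]
  calc _ ≤ ∑ i, s ^ 2 * (Oᵀ j i * O i j) := by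
        refine Finset.sum_le_sum fun i _ => ?_
        rw [Matrix.diagonal_mul, Matrix.transpose_apply]
        nlinarith [aux_sv A hm hn i, mul_self_nonneg (O i j),
          mul_le_mul_of_nonneg_right (aux_sv A hm hn i) (mul_self_nonneg (O i j))]
    _ = s ^ 2 := by rw [← Finset.mul_sum, e3, mul_one]

lemma aux_pow (L : ℕ) (d : ℕ → ℕ)
    (W : ∀ i : ℕ, Matrix (Fin (d (i + 1))) (Fin (d i)) ℝ)
    (hb : ∀ k, k + 1 < L → (W (k + 1))ᵀ * W (k + 1) = W k * (W k)ᵀ) (k : ℕ) (hk : k < L) (j : ℕ) :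
    (chainProd d W k)ᵀ * ((W k)ᵀ * W k) ^ j * chainProd d W k = ((W 0)ᵀ * W 0) ^ (k + j) := by
  induction k generalizing j with
  | zero => simp [chainProd]
  | succ k ih =>
    have comm : ∀ j : ℕ, (W k)ᵀ * (W k * (W k)ᵀ) ^ j * W k = ((W k)ᵀ * W k) ^ (j + 1) := by
      intro j
      induction j with
      | zero => simp
      | succ j ihj =>
        rw [pow_succ _ (j + 1), ← ihj, pow_succ]
        simp only [Matrix.mul_assoc]
    rw [hb k hk, show k + 1 + j = k + (j + 1) by ring, ← ih (by omega) (j + 1), ← comm, chainProd]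
    simp only [Matrix.transpose_mul, Matrix.mul_assoc]

/-- Collapse of the end-to-end minimizer: if the regularization parameter
exceeds `(σ₁(M♮) / ((1 − q/2)(1 − q)^{(q−1)/(2−q)}))^{2−q}`, then every global
minimizer of the ℓ²-regularized deep matrix factorization objective has
end-to-end product zero. -/
theorem stmt10 (L : ℕ) (hL : 3 ≤ L) (q : ℝ) (hq : q = 2 / L)
    (d : ℕ → ℕ) (hd0 : 0 < d 0) (hdL : 0 < d L)
    (hdim : ∀ i : ℕ, 1 ≤ i → i ≤ L - 1 → min (d 0) (d L) ≤ d i)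
    (Mnat : Matrix (Fin (d L)) (Fin (d 0)) ℝ) (lam : ℝ)
    (hlam : (singularValue Mnat ⟨0, lt_min hdL hd0⟩ /
        ((1 - q / 2) * (1 - q) ^ ((q - 1) / (2 - q)))) ^ (2 - q) < lam)
    (W : ∀ i : ℕ, Matrix (Fin (d (i + 1))) (Fin (d i)) ℝ)
    (hW : ∀ V : ∀ i : ℕ, Matrix (Fin (d (i + 1))) (Fin (d i)) ℝ,
      deepLoss L lam d Mnat W ≤ deepLoss L lam d Mnat V) :
    chainProd d W L = 0 := by
  have hL0 : (0 : ℝ) < L := by exact_mod_cast (by omega : 0 < L)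
  have hL3 : (3 : ℝ) ≤ L := by exact_mod_cast hL
  have hq0 : 0 < q := by rw [hq]; positivity
  have hq1 : q < 1 := by rw [hq, div_lt_one hL0]; linarith
  set s := singularValue Mnat ⟨0, lt_min hdL hd0⟩ with hs
  have hs0 : 0 ≤ s := aux_sv_nonneg _ _
  have hlampos : 0 < lam := by
    refine lt_of_le_of_lt (Real.rpow_nonneg (div_nonneg hs0 ?_) _) hlam
    exact mul_nonneg (by linarith) (Real.rpow_nonneg (by linarith) _)
  have hb := aux_balanced L lam hlampos d Mnat W hW
  obtain ⟨K, rfl⟩ : ∃ K, L = K + 1 := ⟨L - 1, by omega⟩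
  set M := chainProd d W (K + 1) with hM
  have hMM : Mᵀ * M = ((W 0)ᵀ * W 0) ^ (K + 1) := by
    rw [← aux_pow (K + 1) d W hb K (by omega) 1, hM, chainProd, pow_one]
    simp only [Matrix.transpose_mul, Matrix.mul_assoc]
  have htr : ∀ k, k < K + 1 → frobNorm (W k) ^ 2 = ((W 0)ᵀ * W 0).trace := by
    intro k hk
    induction k with
    | zero => rw [aux_frob]
    | succ k ih => rw [aux_frob, hb k hk, Matrix.trace_mul_comm, ← aux_frob, ih (by omega)]
  have hsum : ∑ i : Fin (K + 1), frobNorm (W i.1) ^ 2 = ((K + 1 : ℕ) : ℝ) * ((W 0)ᵀ * W 0).trace := by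
    rw [Finset.sum_congr rfl (fun i _ => htr i.1 i.2)]
    simp
  have hloss := hW (fun i => 0)
  unfold deepLoss at hloss
  have hz : chainProd d (fun i => (0 : Matrix (Fin (d (i + 1))) (Fin (d i)) ℝ)) (K + 1) = 0 := by
    rw [chainProd, Matrix.zero_mul]
  have hzf : ∀ {a b : ℕ}, frobNorm (0 : Matrix (Fin a) (Fin b) ℝ) ^ 2 = 0 := by
    intro a b; simp [aux_frob]
  simp only [hz, hzf, hsum, ← hM, sub_zero, Finset.sum_const_zero, mul_zero, add_zero] at hloss
  rw [← mul_assoc, div_mul_cancel₀ _ hL0.ne', aux_frob, aux_frob] at hloss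
  have hpsd : ((W 0)ᵀ * W 0).PosSemidef := by
    have := Matrix.posSemidef_conjTranspose_mul_self (W 0)
    rwa [Matrix.conjTranspose_eq_transpose_of_trivial] at this
  obtain ⟨P, hP, hP', hS⟩ := aux_spec _ hpsd.1
  have ht0 := hpsd.eigenvalues_nonneg
  set t := hpsd.1.eigenvalues with ht
  have hSpow : ∀ n : ℕ, ((W 0)ᵀ * W 0) ^ n = P * Matrix.diagonal (fun j => t j ^ n) * Pᵀ := by
    intro n
    induction n with
    | zero => simp [hP']
    | succ n ih =>
      rw [pow_succ, ih, hS]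
      have : P * Matrix.diagonal (fun j => t j ^ n) * Pᵀ * (P * Matrix.diagonal t * Pᵀ)
        = P * (Matrix.diagonal (fun j => t j ^ n) * ((Pᵀ * P) * Matrix.diagonal t)) * Pᵀ := by
          simp only [Matrix.mul_assoc]
      rw [this, hP, Matrix.one_mul, Matrix.diagonal_mul_diagonal]
      simp only [pow_succ]
  have htrP : ∀ Z : Matrix (Fin (d 0)) (Fin (d 0)) ℝ, (P * Z * Pᵀ).trace = Z.trace := by
    intro Z
    rw [Matrix.trace_mul_comm, ← Matrix.mul_assoc, hP, Matrix.one_mul]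
  have trS : ((W 0)ᵀ * W 0).trace = ∑ j, t j := by
    rw [hS, htrP, Matrix.trace_diagonal]
  have trM : (Mᵀ * M).trace = ∑ j, t j ^ (K + 1) := by
    rw [hMM, hSpow, htrP, Matrix.trace_diagonal]
  have hMP : ∀ j, ((M * P)ᵀ * (M * P)) j j = t j ^ (K + 1) := by
    intro j
    have : (M * P)ᵀ * (M * P) = Pᵀ * (Mᵀ * M) * P := by
      simp only [Matrix.transpose_mul, Matrix.mul_assoc]
    rw [this, hMM, hSpow]
    have : Pᵀ * (P * Matrix.diagonal (fun j => t j ^ (K + 1)) * Pᵀ) * P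
        = (Pᵀ * P) * Matrix.diagonal (fun j => t j ^ (K + 1)) * (Pᵀ * P) := by
      simp only [Matrix.mul_assoc]
    rw [this, hP, Matrix.one_mul, Matrix.mul_one, Matrix.diagonal_apply_eq]
  have hcross : (Mnatᵀ * M).trace ≤ ∑ j, s * Real.sqrt (t j ^ (K + 1)) := by
    have : (Mnatᵀ * M).trace = ((Mnat * P)ᵀ * (M * P)).trace := by
      have e1 : (Mnat * P)ᵀ * (M * P) = Pᵀ * (Mnatᵀ * M * P) := by
        simp only [Matrix.transpose_mul, Matrix.mul_assoc]
      rw [e1, Matrix.trace_mul_comm Pᵀ, Matrix.mul_assoc, hP', Matrix.mul_one]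
    rw [this]
    refine Finset.sum_le_sum fun j _ => ?_
    have h1 := aux_col Mnat hdL hd0 P hP j
    rw [← hs] at h1
    have h2 := hMP j
    rw [Matrix.diag_apply]
    rw [Matrix.mul_apply] at h1 h2 ⊢
    simp only [Matrix.transpose_apply, ← sq] at h1 h2 ⊢
    refine (Real.sum_mul_le_sqrt_mul_sqrt _ _ _).trans ?_
    rw [h2]
    exact mul_le_mul_of_nonneg_right (Real.sqrt_le_iff.2 ⟨hs0, h1⟩) (Real.sqrt_nonneg _)
  have hexp : ((Mnat - M)ᵀ * (Mnat - M)).trace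
      = (Mnatᵀ * Mnat).trace - 2 * (Mnatᵀ * M).trace + (Mᵀ * M).trace := by
    have : (Mᵀ * Mnat).trace = (Mnatᵀ * M).trace := by
      rw [← Matrix.trace_transpose, Matrix.transpose_mul, Matrix.transpose_transpose]
    simp only [Matrix.transpose_sub, Matrix.sub_mul, Matrix.mul_sub, Matrix.trace_sub, this]
    ring
  set f : Fin (d 0) → ℝ := fun j => t j ^ (K + 1) - 2 * (s * Real.sqrt (t j ^ (K + 1))) + lam * t j with hf
  have hfsum : ∑ j, f j ≤ 0 := by
    simp only [hf, Finset.sum_add_distrib, Finset.sum_sub_distrib, ← Finset.mul_sum] at hcross ⊢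
    rw [trS] at hloss
    linarith
  have hfpos : ∀ j, 0 < t j → 0 < f j := by
    intro j hj
    have hx : 0 < Real.sqrt (t j ^ (K + 1)) := Real.sqrt_pos.2 (pow_pos hj _)
    have := aux_scalar q s lam _ hq0 hq1 hs0 hx hlam
    have e1 : Real.sqrt (t j ^ (K + 1)) ^ q = t j := by
      rw [Real.sqrt_eq_rpow, ← Real.rpow_natCast, ← Real.rpow_mul hj.le, ← Real.rpow_mul hj.le, hq]
      have : ((K + 1 : ℕ) : ℝ) * (1 / 2) * (2 / ((K + 1 : ℕ) : ℝ)) = 1 := by field_simp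
      rw [this, Real.rpow_one]
    rw [e1, Real.sq_sqrt (pow_pos hj _).le] at this
    simp only [hf]; linarith
  have hfnn : ∀ j, 0 ≤ f j := by
    intro j
    rcases (ht0 j).eq_or_lt with h | h
    · simp only [hf]
      rw [← h]
      simp
    · exact (hfpos j h).le
  have hf0 := (Finset.sum_eq_zero_iff_of_nonneg (fun j _ => hfnn j)).1
    (le_antisymm hfsum (Finset.sum_nonneg fun j _ => hfnn j))
  have htz : ∀ j, t j = 0 := by
    intro j
    rcases (ht0 j).eq_or_lt with h | h
    · exact h.symm
    · exact absurd (hf0 j (Finset.mem_univ j)) (hfpos j h).ne'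
  apply aux_trace_zero
  rw [trM]
  simp [htz]
end

section
/- Let L ≥ 3 be an integer, λ > 0, q := 2/L, and let M♮ ∈ ℝ^{d_L × d_0} with r := min{d_0, d_L}. Suppose min_{1 ≤ i ≤ L−1} d_i ≥ min{d_0, d_L}, σ_i(M♮) ≠ τ for every i ∈ {1, …, r}, and σ_1(M♮) > τ, where τ := (1 − q/2)·λ^{1/(2−q)}·(1 − q)^{(q−1)/(2−q)}. Consider 𝓛(W_1, …, W_L) := ‖M♮ − W_L···W_1‖_F² + (λ/L)·Σ_{i=1}^L ‖W_i‖_F² as a smooth function of the N := Σ_{i=1}^L d_i·d_{i−1} scalar entries of the layers. Then for every global minimizer w* = (W*_1, …, W*_L) of 𝓛, the trace of the Hessian of 𝓛 at w* (the sum over all N coordinates of the second partial derivative of 𝓛 in that coordinate, evaluated at w*) satisfies tr(∇²𝓛(w*)) ≥ 2L·‖P*‖_F² / g*² + (2λ/L)·N, where P* := W*_L···W*_1 and g* := ‖W*_1‖_F. -/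
open Matrix

noncomputable def fsq {m n : ℕ} (A : Matrix (Fin m) (Fin n) ℝ) : ℝ := ∑ i, ∑ j, (A i j) ^ 2

noncomputable def fip {m n : ℕ} (A B : Matrix (Fin m) (Fin n) ℝ) : ℝ := ∑ i, ∑ j, A i j * B i j

theorem frobNorm_sq {m n : ℕ} (A : Matrix (Fin m) (Fin n) ℝ) : frobNorm A ^ 2 = fsq A := by
  unfold frobNorm fsq
  exact Real.sq_sqrt (Finset.sum_nonneg fun i _ => Finset.sum_nonneg fun j _ => sq_nonneg _)

theorem fsq_nonneg {m n : ℕ} (A : Matrix (Fin m) (Fin n) ℝ) : 0 ≤ fsq A :=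
  Finset.sum_nonneg fun i _ => Finset.sum_nonneg fun j _ => sq_nonneg _

theorem fsq_add_smul {m n : ℕ} (A B : Matrix (Fin m) (Fin n) ℝ) (t : ℝ) :
    fsq (A + t • B) = fsq A + 2 * fip A B * t + fsq B * t ^ 2 := by
  simp only [fsq, fip, Finset.mul_sum, Finset.sum_mul, ← Finset.sum_add_distrib]
  refine Finset.sum_congr rfl fun i _ => Finset.sum_congr rfl fun j _ => ?_
  simp only [Matrix.add_apply, Matrix.smul_apply, smul_eq_mul]
  ring

theorem fsq_mul_le {m n p : ℕ} (A : Matrix (Fin m) (Fin n) ℝ) (B : Matrix (Fin n) (Fin p) ℝ) :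
    fsq (A * B) ≤ fsq A * fsq B := by
  have h : fsq A * fsq B = ∑ i, ∑ j, (∑ k, A i k ^ 2) * (∑ k, B k j ^ 2) := by
    unfold fsq
    rw [Finset.sum_comm (f := fun i j => B i j ^ 2), Finset.sum_mul_sum]
  rw [h]
  unfold fsq
  refine Finset.sum_le_sum fun i _ => Finset.sum_le_sum fun j _ => ?_
  rw [Matrix.mul_apply]
  exact Finset.sum_mul_sq_le_sq_mul_sq _ _ _

theorem fsq_single {m n p r : ℕ} (A : Matrix (Fin m) (Fin n) ℝ) (B : Matrix (Fin p) (Fin r) ℝ)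
    (a : Fin n) (b : Fin p) :
    fsq (A * Matrix.single a b (1:ℝ) * B) = (∑ i, A i a ^ 2) * (∑ j, B b j ^ 2) := by
  unfold fsq
  rw [Finset.sum_mul_sum]
  refine Finset.sum_congr rfl fun i _ => Finset.sum_congr rfl fun j _ => ?_
  have : (A * Matrix.single a b (1:ℝ) * B) i j = A i a * B b j := by
    rw [Matrix.mul_apply, Finset.sum_eq_single b]
    · simp
    · intro c _ hc
      rw [Matrix.mul_single_apply_of_ne _ _ _ _ _ hc]
      simp
    · simp
  rw [this, mul_pow]

theorem sum_fsq_single {m n p r : ℕ} (A : Matrix (Fin m) (Fin n) ℝ)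
    (B : Matrix (Fin p) (Fin r) ℝ) :
    ∑ a : Fin n, ∑ b : Fin p, fsq (A * Matrix.single a b (1:ℝ) * B) = fsq A * fsq B := by
  simp only [fsq_single]
  unfold fsq
  rw [Finset.sum_comm (f := fun i j => A i j ^ 2), Finset.sum_mul_sum]

theorem fsq_single_one {n p : ℕ} (a : Fin n) (b : Fin p) :
    fsq (Matrix.single a b (1:ℝ)) = 1 := by
  have := fsq_single (1 : Matrix (Fin n) (Fin n) ℝ) (1 : Matrix (Fin p) (Fin p) ℝ) a b
  simpa [Matrix.one_apply] using this

theorem chainProd_update_le (d : ℕ → ℕ) (W : ∀ i : ℕ, Matrix (Fin (d (i + 1))) (Fin (d i)) ℝ)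
    (i : ℕ) (X : Matrix (Fin (d (i + 1))) (Fin (d i)) ℝ) (k : ℕ) (hk : k ≤ i) :
    chainProd d (Function.update W i X) k = chainProd d W k := by
  induction k with
  | zero => rfl
  | succ k ih =>
    simp only [chainProd]
    rw [ih (by omega), Function.update_of_ne (by omega)]

theorem chainProd_update (d : ℕ → ℕ) (W : ∀ i : ℕ, Matrix (Fin (d (i + 1))) (Fin (d i)) ℝ)
    (i : ℕ) (L : ℕ) (hi : i + 1 ≤ L) :
    ∃ A : Matrix (Fin (d L)) (Fin (d (i + 1))) ℝ, ∀ X,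
      chainProd d (Function.update W i X) L = A * X * chainProd d W i := by
  induction L, hi using Nat.le_induction with
  | base =>
    refine ⟨1, fun X => ?_⟩
    simp only [chainProd]
    rw [chainProd_update_le d W i X i le_rfl, Function.update_self, Matrix.one_mul]
  | succ L hL ih =>
    obtain ⟨A, hA⟩ := ih
    refine ⟨W L * A, fun X => ?_⟩
    simp only [chainProd]
    rw [hA, Function.update_of_ne (by omega)]
    simp only [Matrix.mul_assoc]

theorem iter_quad (c0 c1 c2 : ℝ) :
    iteratedDeriv 2 (fun t : ℝ => c0 + c1 * t + c2 * t ^ 2) 0 = 2 * c2 := by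
  have h1 : deriv (fun t : ℝ => c0 + c1 * t + c2 * t ^ 2) = fun t => c1 + 2 * c2 * t := by
    funext t
    have := (((hasDerivAt_id t).const_mul c1).const_add c0).add
      (((hasDerivAt_id t).pow 2).const_mul c2)
    refine HasDerivAt.deriv (this.congr_deriv ?_)
    simp
    ring
  rw [iteratedDeriv_succ, iteratedDeriv_one, h1]
  have := ((hasDerivAt_id (0:ℝ)).const_mul (2 * c2)).const_add c1
  simpa using this.deriv

theorem sum_update (L : ℕ) (d : ℕ → ℕ) (W : ∀ i : ℕ, Matrix (Fin (d (i + 1))) (Fin (d i)) ℝ)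
    (i : Fin L) (X : Matrix (Fin (d (i.1 + 1))) (Fin (d i.1)) ℝ) :
    ∑ j : Fin L, fsq (Function.update W i.1 X j.1) =
      (∑ j : Fin L, fsq (W j.1)) - fsq (W i.1) + fsq X := by
  rw [← Finset.add_sum_erase _ _ (Finset.mem_univ i),
    ← Finset.add_sum_erase _ (fun j : Fin L => fsq (W j.1)) (Finset.mem_univ i)]
  rw [Function.update_self]
  have : ∑ j ∈ Finset.univ.erase i, fsq (Function.update W i.1 X j.1) =
      ∑ j ∈ Finset.univ.erase i, fsq (W j.1) := by
    refine Finset.sum_congr rfl fun j hj => ?_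
    rw [Function.update_of_ne]
    intro h
    exact (Finset.mem_erase.1 hj).1 (Fin.ext h)
  rw [this]
  ring

/-- Everything about a line through `W` in layer `i`. -/
theorem deepLoss_line (L : ℕ) (lam : ℝ) (d : ℕ → ℕ)
    (Mnat : Matrix (Fin (d L)) (Fin (d 0)) ℝ)
    (W : ∀ i : ℕ, Matrix (Fin (d (i + 1))) (Fin (d i)) ℝ) (i : Fin L)
    (A : Matrix (Fin (d L)) (Fin (d (i.1 + 1))) ℝ)
    (hA : ∀ X, chainProd d (Function.update W i.1 X) L = A * X * chainProd d W i.1)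
    (Y : Matrix (Fin (d (i.1 + 1))) (Fin (d i.1)) ℝ) (t : ℝ) :
    deepLoss L lam d Mnat (Function.update W i.1 (W i.1 + t • Y)) =
      deepLoss L lam d Mnat W +
      (2 * fip (Mnat - chainProd d W L) (-(A * Y * chainProd d W i.1))
        + lam / L * (2 * fip (W i.1) Y)) * t +
      (fsq (-(A * Y * chainProd d W i.1)) + lam / L * fsq Y) * t ^ 2 := by
  have h0 : chainProd d W L = A * W i.1 * chainProd d W i.1 := by
    rw [← hA, Function.update_eq_self]
  simp only [deepLoss, frobNorm_sq]
  rw [sum_update, fsq_add_smul, hA]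
  have h1 : Mnat - A * (W i.1 + t • Y) * chainProd d W i.1 =
      (Mnat - chainProd d W L) + t • (-(A * Y * chainProd d W i.1)) := by
    rw [h0, Matrix.mul_add, Matrix.add_mul, Matrix.mul_smul, Matrix.smul_mul, smul_neg]
    abel
  rw [h1, fsq_add_smul]
  ring

theorem fsq_neg {m n : ℕ} (A : Matrix (Fin m) (Fin n) ℝ) : fsq (-A) = fsq A := by
  simp [fsq]

theorem fip_self {m n : ℕ} (A : Matrix (Fin m) (Fin n) ℝ) : fip A A = fsq A := by
  simp [fsq, fip, sq]

theorem quad_min (b c : ℝ) (h : ∀ t : ℝ, 0 ≤ b * t + c * t ^ 2) : b = 0 := by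
  have hc : 0 ≤ c := by
    have h1 := h 1
    have h2 := h (-1)
    linarith
  have h3 := h (-b / (c + 1))
  have hp : 0 < c + 1 := by linarith
  have : b * (-b / (c + 1)) + c * (-b / (c + 1)) ^ 2 = - b ^ 2 / (c + 1) ^ 2 := by
    field_simp
    ring
  rw [this, neg_div, Left.nonneg_neg_iff] at h3
  have h4 : b ^ 2 / (c + 1) ^ 2 = 0 := le_antisymm h3 (by positivity)
  have h5 : b ^ 2 = 0 := by
    rcases div_eq_zero_iff.1 h4 with h | h
    · exact h
    · exact absurd h (by positivity)
  exact pow_eq_zero_iff (two_ne_zero) |>.1 h5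

/-- Lower bound for the trace of the Hessian of the ℓ²-regularized deep matrix
factorization objective at any global minimizer: the sum over all `N` scalar
coordinates of the pure second partial derivatives of `𝓛` at `w*` is at least
`2L·‖P*‖_F²/g*² + (2λ/L)·N`, where `P*` is the end-to-end product and
`g* = ‖W*_1‖_F`. -/
theorem stmt11 (L : ℕ) (hL : 3 ≤ L) (lam : ℝ) (hlam : 0 < lam) (q τ : ℝ)
    (hq : q = 2 / L)
    (hτ : τ = (1 - q / 2) * lam ^ (1 / (2 - q)) * (1 - q) ^ ((q - 1) / (2 - q)))
    (d : ℕ → ℕ) (hd0 : 0 < d 0) (hdL : 0 < d L)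
    (hdim : ∀ i : ℕ, 1 ≤ i → i ≤ L - 1 → min (d 0) (d L) ≤ d i)
    (Mnat : Matrix (Fin (d L)) (Fin (d 0)) ℝ)
    (hσ : ∀ i : Fin (min (d L) (d 0)), singularValue Mnat i ≠ τ)
    (hσ1 : τ < singularValue Mnat ⟨0, lt_min hdL hd0⟩)
    (W : ∀ i : ℕ, Matrix (Fin (d (i + 1))) (Fin (d i)) ℝ)
    (hW : ∀ V : ∀ i : ℕ, Matrix (Fin (d (i + 1))) (Fin (d i)) ℝ,
      deepLoss L lam d Mnat W ≤ deepLoss L lam d Mnat V) :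
    2 * L * frobNorm (chainProd d W L) ^ 2 / frobNorm (W 0) ^ 2 +
        (2 * lam / L) * ((∑ i : Fin L, d (i.1 + 1) * d i.1 : ℕ) : ℝ) ≤
      ∑ i : Fin L, ∑ a : Fin (d (i.1 + 1)), ∑ b : Fin (d i.1),
        iteratedDeriv 2 (fun t : ℝ =>
          deepLoss L lam d Mnat
            (Function.update W i.1 (W i.1 + t • Matrix.single a b 1))) 0 := by
  choose A hA using fun i : Fin L => chainProd_update d W i.1 L i.2
  have h0 : ∀ i : Fin L, A i * W i.1 * chainProd d W i.1 = chainProd d W L := fun i => by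
    rw [← hA, Function.update_eq_self]
  have hLpos : (0:ℝ) < L := by
    have : 0 < L := by omega
    exact_mod_cast this
  have hcrit : ∀ i : Fin L, 2 * fip (Mnat - chainProd d W L) (-(chainProd d W L))
        + lam / L * (2 * fsq (W i.1)) = 0 := by
    intro i
    refine quad_min _ (fsq (-(chainProd d W L)) + lam / L * fsq (W i.1)) fun t => ?_
    have h1 := deepLoss_line L lam d Mnat W i (A i) (hA i) (W i.1) t
    have h2 := hW (Function.update W i.1 (W i.1 + t • W i.1))
    rw [h0, fip_self] at h1
    linarith
  have hbal : ∀ i : Fin L, fsq (W i.1) = fsq (W 0) := by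
    intro i
    have h1 := hcrit i
    have h2 := hcrit ⟨0, by omega⟩
    have h3 : 0 < lam / L := by positivity
    have h4 : lam / L * (fsq (W i.1) - fsq (W 0)) = 0 := by
      simp only at h2
      linarith
    rcases mul_eq_zero.1 h4 with h | h <;> linarith
  have hder : ∀ i : Fin L, ∑ a : Fin (d (i.1 + 1)), ∑ b : Fin (d i.1),
        iteratedDeriv 2 (fun t : ℝ =>
          deepLoss L lam d Mnat
            (Function.update W i.1 (W i.1 + t • Matrix.single a b 1))) 0 =
      2 * (fsq (A i) * fsq (chainProd d W i.1)) +
        2 * lam / L * ((d (i.1 + 1) : ℝ) * (d i.1 : ℝ)) := by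
    intro i
    simp only [deepLoss_line L lam d Mnat W i (A i) (hA i), iter_quad, fsq_neg, fsq_single_one]
    rw [← sum_fsq_single]
    simp only [mul_add, Finset.sum_add_distrib, ← Finset.mul_sum]
    simp
    ring
  rw [Finset.sum_congr rfl fun i _ => hder i, Finset.sum_add_distrib, ← Finset.mul_sum,
    ← Finset.mul_sum]
  push_cast
  gcongr ?_ + _
  rw [frobNorm_sq, frobNorm_sq]
  have key : ∀ i : Fin L, fsq (chainProd d W L) / fsq (W 0) ≤
      fsq (A i) * fsq (chainProd d W i.1) := by
    intro i
    refine div_le_of_le_mul₀ (fsq_nonneg _) (mul_nonneg (fsq_nonneg _) (fsq_nonneg _)) ?_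
    rw [← h0 i, ← hbal i]
    calc _ ≤ fsq (A i * W i.1) * fsq (chainProd d W i.1) := fsq_mul_le _ _
      _ ≤ fsq (A i) * fsq (W i.1) * fsq (chainProd d W i.1) :=
        mul_le_mul_of_nonneg_right (fsq_mul_le _ _) (fsq_nonneg _)
      _ = _ := by ring
  have hs := Finset.sum_le_sum fun (i : Fin L) (_ : i ∈ Finset.univ) => key i
  simp only [Finset.sum_const, Finset.card_univ, Fintype.card_fin, nsmul_eq_mul] at hs
  rw [mul_assoc, mul_div_assoc, mul_div_assoc]
  linarith
end

section
/- Let A, B ∈ ℝ^{n×n}. Then tr(AB) ≤ Σ_{i=1}^n σ_i(A)·σ_i(B), where σ_1(A) ≥ ⋯ ≥ σ_n(A) and σ_1(B) ≥ ⋯ ≥ σ_n(B) are the non-increasingly ordered singular values of A and B (von Neumann's trace inequality). -/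
open Matrix

theorem vn_svd {n : ℕ} (A : Matrix (Fin n) (Fin n) ℝ) :
    ∃ U V : Matrix (Fin n) (Fin n) ℝ, Uᵀ * U = 1 ∧ Vᵀ * V = 1 ∧
      A = U * diagonal (fun j => Real.sqrt
        ((Matrix.isHermitian_conjTranspose_mul_self A).eigenvalues j)) * Vᵀ := by
  set hA := Matrix.isHermitian_conjTranspose_mul_self A
  have hnn : ∀ j, 0 ≤ hA.eigenvalues j :=
    (Matrix.posSemidef_conjTranspose_mul_self A).eigenvalues_nonneg
  set s : Fin n → ℝ := fun j => Real.sqrt (hA.eigenvalues j) with hs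
  have hss : ∀ j, s j * s j = hA.eigenvalues j := fun j => Real.mul_self_sqrt (hnn j)
  set V : Matrix (Fin n) (Fin n) ℝ := (hA.eigenvectorUnitary : Matrix (Fin n) (Fin n) ℝ) with hV
  have hVV : Vᵀ * V = 1 := by
    have := (Matrix.mem_unitaryGroup_iff' (A := V)).1 hA.eigenvectorUnitary.2
    rwa [Matrix.star_eq_conjTranspose, Matrix.conjTranspose_eq_transpose_of_trivial] at this
  have hVV' : V * Vᵀ = 1 := mul_eq_one_comm.1 hVV
  have hsp : (A * V)ᵀ * (A * V) = diagonal hA.eigenvalues := by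
    have h := hA.spectral_theorem
    rw [Unitary.conjStarAlgAut_apply] at h
    rw [Matrix.star_eq_conjTranspose, ← hV, Matrix.conjTranspose_eq_transpose_of_trivial V] at h
    have h2 : Vᵀ * (Aᴴ * A) * V = diagonal hA.eigenvalues := by
      refine (congrArg (fun X => Vᵀ * X * V) h).trans ?_
      simp only [Matrix.mul_assoc, hVV, Matrix.mul_one]
      rw [← Matrix.mul_assoc, hVV, Matrix.one_mul]
      rfl
    rw [← h2, Matrix.transpose_mul, ← Matrix.conjTranspose_eq_transpose_of_trivial A]
    simp only [Matrix.mul_assoc]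
  have hcol : ∀ i j, ∑ k, (A * V) k i * (A * V) k j = if i = j then hA.eigenvalues i else 0 := by
    intro i j
    have := congrFun (congrFun hsp i) j
    rw [Matrix.mul_apply, Matrix.diagonal_apply] at this
    simpa using this
  let u : Fin n → EuclideanSpace ℝ (Fin n) :=
    fun j => WithLp.toLp 2 (fun k => (A * V) k j / s j)
  have hu : Orthonormal ℝ ({j | s j ≠ 0}.domRestrict u) := by
    rw [orthonormal_iff_ite]
    rintro ⟨i, hi⟩ ⟨j, hj⟩
    have hi' : s i ≠ 0 := hi
    have hj' : s j ≠ 0 := hj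
    have e : inner ℝ (u i) (u j) = (∑ k, (A * V) k i * (A * V) k j) / (s i * s j) := by
      simp only [u, PiLp.inner_apply, Finset.sum_div]
      refine Finset.sum_congr rfl fun k _ => ?_
      simp
      field_simp
    simp only [Subtype.mk.injEq]
    change inner ℝ (u i) (u j) = _
    rw [e, hcol]
    split_ifs with h
    · subst h
      rw [hss, div_self]
      rw [← hss]
      exact mul_ne_zero hi' hi'
    · simp
  obtain ⟨b, hb⟩ := hu.exists_orthonormalBasis_extension_of_card_eq (by simp)
  refine ⟨Matrix.of fun k j => b j k, V, ?_, hVV, ?_⟩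
  · ext i j
    have := orthonormal_iff_ite.1 b.orthonormal i j
    rw [PiLp.inner_apply] at this
    rw [Matrix.mul_apply, Matrix.one_apply, ← this]
    refine Finset.sum_congr rfl fun k _ => ?_
    simp [mul_comm]
  · have key : A * V = (Matrix.of fun k j => b j k) * diagonal s := by
      ext k j
      rw [Matrix.mul_diagonal, Matrix.of_apply]
      by_cases h : s j = 0
      · have h0 := hcol j j
        rw [if_pos rfl, ← hss, h, mul_zero,
          Finset.sum_eq_zero_iff_of_nonneg (fun _ _ => mul_self_nonneg _)] at h0
        rw [h, mul_zero]
        exact mul_self_eq_zero.1 (h0 k (Finset.mem_univ _))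
      · rw [hb j h]
        simp only [u]
        field_simp
    rw [← key, Matrix.mul_assoc, hVV', Matrix.mul_one]

theorem vn_ds {n : ℕ} {P : Matrix (Fin n) (Fin n) ℝ} (hP : Pᵀ * P = 1) (j : Fin n) :
    ∑ k, P k j ^ 2 = 1 := by
  have := congrFun (congrFun hP j) j
  rw [Matrix.mul_apply, Matrix.one_apply_eq] at this
  rw [← this]
  exact Finset.sum_congr rfl fun k _ => by simp [sq]

theorem vn_perm {n : ℕ} (s t : Fin n → ℝ) (τ : Equiv.Perm (Fin n)) :
    ∑ j, s j * t (τ j) ≤ ∑ i, (s ∘ Tuple.sort s) i * (t ∘ Tuple.sort t) i := by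
  have hm : Monovary (s ∘ Tuple.sort s) (t ∘ Tuple.sort t) :=
    (Tuple.monotone_sort s).monovary (Tuple.monotone_sort t)
  have := hm.sum_mul_comp_perm_le_sum_mul (σ := ((Tuple.sort s).trans τ).trans (Tuple.sort t).symm)
  refine le_trans (le_of_eq ?_) this
  rw [← Equiv.sum_comp (Tuple.sort s)]
  simp

theorem vn_stoch {n : ℕ} (s t : Fin n → ℝ) (M : Matrix (Fin n) (Fin n) ℝ)
    (hM : M ∈ doublyStochastic ℝ (Fin n)) :
    ∑ j, ∑ k, s j * t k * M j k ≤ ∑ i, (s ∘ Tuple.sort s) i * (t ∘ Tuple.sort t) i := by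
  obtain ⟨w, hw0, hw1, rfl⟩ := exists_eq_sum_perm_of_mem_doublyStochastic hM
  set R := ∑ i, (s ∘ Tuple.sort s) i * (t ∘ Tuple.sort t) i
  have e : ∑ j, ∑ k, s j * t k * (∑ σ, w σ • Equiv.Perm.permMatrix ℝ σ) j k
      = ∑ σ : Equiv.Perm (Fin n), w σ * ∑ j, s j * t (σ j) := by
    simp only [Matrix.sum_apply, Matrix.smul_apply, Finset.mul_sum, smul_eq_mul]
    rw [Finset.sum_comm' (t' := Finset.univ) (s' := fun _ => Finset.univ) (by simp)]
    rw [Finset.sum_comm]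
    simp_rw [Finset.sum_comm (s := (Finset.univ : Finset (Fin n))) (t := (Finset.univ : Finset (Equiv.Perm (Fin n))))]
    refine Finset.sum_congr rfl fun σ _ => Finset.sum_congr rfl fun j _ => ?_
    simp [Equiv.Perm.permMatrix, PEquiv.toMatrix_apply]
    ring
  rw [e]
  calc _ ≤ ∑ σ : Equiv.Perm (Fin n), w σ * R :=
        Finset.sum_le_sum fun σ _ => mul_le_mul_of_nonneg_left (vn_perm s t σ) (hw0 σ)
    _ = R := by rw [← Finset.sum_mul, hw1, one_mul]

theorem vn_orth {n : ℕ} {U V : Matrix (Fin n) (Fin n) ℝ} (hU : Uᵀ * U = 1) (hV : Vᵀ * V = 1) :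
    (Uᵀ * V)ᵀ * (Uᵀ * V) = 1 := by
  have hU' : U * Uᵀ = 1 := mul_eq_one_comm.1 hU
  rw [Matrix.transpose_mul, Matrix.transpose_transpose, Matrix.mul_assoc, ← Matrix.mul_assoc U,
    hU', Matrix.one_mul, hV]

theorem vn_diag {n : ℕ} (s t : Fin n → ℝ) (hs : ∀ i, 0 ≤ s i) (ht : ∀ i, 0 ≤ t i)
    (P Q : Matrix (Fin n) (Fin n) ℝ) (hP : Pᵀ * P = 1) (hQ : Qᵀ * Q = 1) :
    Matrix.trace (diagonal s * P * (diagonal t * Q)) ≤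
      ∑ i, (s ∘ Tuple.sort s) i * (t ∘ Tuple.sort t) i := by
  have hP' : Pᵀᵀ * Pᵀ = 1 := by rw [Matrix.transpose_transpose]; exact mul_eq_one_comm.1 hP
  have hQ' : Qᵀᵀ * Qᵀ = 1 := by rw [Matrix.transpose_transpose]; exact mul_eq_one_comm.1 hQ
  refine le_trans ?_ (vn_stoch s t (Matrix.of fun j k => (P j k ^ 2 + Q k j ^ 2) / 2) ?_)
  · rw [Matrix.trace]
    refine Finset.sum_le_sum fun j _ => ?_
    rw [Matrix.diag_apply, Matrix.mul_apply]
    refine Finset.sum_le_sum fun k _ => ?_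
    rw [Matrix.diagonal_mul, Matrix.diagonal_mul, Matrix.of_apply]
    have h1 := mul_nonneg (hs j) (ht k)
    have h2 : P j k * Q k j ≤ (P j k ^ 2 + Q k j ^ 2) / 2 := by
      nlinarith [sq_nonneg (P j k - Q k j)]
    calc s j * P j k * (t k * Q k j) = s j * t k * (P j k * Q k j) := by ring
      _ ≤ _ := mul_le_mul_of_nonneg_left h2 h1
  · rw [mem_doublyStochastic_iff_sum]
    refine ⟨fun i j => ?_, fun i => ?_, fun j => ?_⟩
    · rw [Matrix.of_apply]; positivity
    · have a := vn_ds hP' i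
      have b := vn_ds hQ i
      simp only [Matrix.transpose_apply] at a
      simp only [Matrix.of_apply]
      rw [← Finset.sum_div, Finset.sum_add_distrib, a, b]; norm_num
    · have a := vn_ds hP j
      have b := vn_ds hQ' j
      simp only [Matrix.transpose_apply] at b
      simp only [Matrix.of_apply]
      rw [← Finset.sum_div, Finset.sum_add_distrib, a, b]; norm_num

/-- Von Neumann's trace inequality: `tr(AB) ≤ ∑ᵢ σᵢ(A)·σᵢ(B)` for square real
matrices `A`, `B`, where the singular values are ordered non-increasingly. -/
theorem stmt12 (n : ℕ) (A B : Matrix (Fin n) (Fin n) ℝ) :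
    Matrix.trace (A * B) ≤ ∑ i : Fin (min n n), singularValue A i * singularValue B i := by
  obtain ⟨U, V, hU, hV, hA⟩ := vn_svd A
  obtain ⟨W, Z, hW, hZ, hB⟩ := vn_svd B
  set s : Fin n → ℝ := fun j => Real.sqrt
    ((Matrix.isHermitian_conjTranspose_mul_self A).eigenvalues j) with hs
  set t : Fin n → ℝ := fun j => Real.sqrt
    ((Matrix.isHermitian_conjTranspose_mul_self B).eigenvalues j) with ht
  have hR : ∑ i : Fin (min n n), singularValue A i * singularValue B i
      = ∑ i, (s ∘ Tuple.sort s) i * (t ∘ Tuple.sort t) i := by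
    refine Fintype.sum_equiv ((finCongr (Nat.min_self n)).trans Fin.revPerm) _ _ fun i => ?_
    rfl
  have hT : Matrix.trace (A * B)
      = Matrix.trace (diagonal s * (Vᵀ * W) * (diagonal t * (Zᵀ * U))) := by
    calc Matrix.trace (A * B)
        = Matrix.trace (U * diagonal s * Vᵀ * (W * diagonal t * Zᵀ)) := by
          rw [← hA, ← hB]
      _ = Matrix.trace (U * (diagonal s * (Vᵀ * W) * (diagonal t * Zᵀ))) := by
          simp only [Matrix.mul_assoc]
      _ = _ := by
          rw [Matrix.trace_mul_comm]
          simp only [Matrix.mul_assoc]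
  rw [hR, hT]
  exact vn_diag s t (fun _ => Real.sqrt_nonneg _) (fun _ => Real.sqrt_nonneg _) _ _
    (vn_orth hV hW) (vn_orth hZ hU)
end

section
/- Let A, B ∈ ℝ^{m×n} and r := min{m,n}. Then tr(A·Bᵀ) ≤ Σ_{i=1}^r σ_i(A)·σ_i(B), where σ_1(A) ≥ ⋯ ≥ σ_r(A) and σ_1(B) ≥ ⋯ ≥ σ_r(B) are the non-increasingly ordered singular values of A and B. -/
open Matrix

lemma vn_ext (n : ℕ) (s : Fin n → ℝ) (hs : Antitone s) (h0 : ∀ i, 0 ≤ s i) :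
    ∃ a : Fin n → ℝ, (∀ p, 0 ≤ a p) ∧ ∀ j, s j = ∑ p, if j ≤ p then a p else 0 := by
  induction n with
  | zero => exact ⟨fun _ => 0, fun p => p.elim0, fun p => p.elim0⟩
  | succ n ih =>
    obtain ⟨a, ha, hsa⟩ := ih (fun i => s i.castSucc - s (Fin.last n))
      (fun i j h => by
        have := hs (Fin.castSucc_le_castSucc_iff.2 h)
        simpa using this)
      (fun i => sub_nonneg.2 (hs (Fin.le_last _)))
    refine ⟨Fin.snoc a (s (Fin.last n)), ?_, ?_⟩
    · intro p
      refine Fin.lastCases ?_ (fun i => ?_) p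
      · simpa using h0 _
      · simpa using ha i
    · intro j
      rw [Fin.sum_univ_castSucc]
      refine Fin.lastCases ?_ (fun i => ?_) j
      · simp [Fin.not_le.2 (Fin.castSucc_lt_last _)]
      · have := hsa i
        simp only [Fin.castSucc_le_castSucc_iff, Fin.snoc_castSucc, Fin.snoc_last, Fin.le_last, if_true]
        linarith

lemma vn_sub (n : ℕ) (s t : Fin n → ℝ) (hs : Antitone s) (hs0 : ∀ i, 0 ≤ s i)
    (ht : Antitone t) (ht0 : ∀ i, 0 ≤ t i) (M : Fin n → Fin n → ℝ)
    (hM : ∀ i j, 0 ≤ M i j) (hr : ∀ i, ∑ j, M i j ≤ 1) (hc : ∀ j, ∑ i, M i j ≤ 1) :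
    ∑ i, ∑ j, s i * t j * M i j ≤ ∑ i, s i * t i := by
  obtain ⟨a, ha, hsa⟩ := vn_ext n s hs hs0
  obtain ⟨b, hb, htb⟩ := vn_ext n t ht ht0
  have key : ∀ N : Fin n → Fin n → ℝ, ∑ i, ∑ j, s i * t j * N i j =
      ∑ p, ∑ q, a p * b q * ∑ i, ∑ j, if i ≤ p ∧ j ≤ q then N i j else 0 := by
    intro N
    have : ∀ i j, s i * t j * N i j =
        ∑ p, ∑ q, a p * b q * (if i ≤ p ∧ j ≤ q then N i j else 0) := by
      intro i j
      rw [hsa i, htb j, Finset.sum_mul_sum, Finset.sum_mul]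
      refine Finset.sum_congr rfl fun p _ => ?_
      rw [Finset.sum_mul]
      refine Finset.sum_congr rfl fun q _ => ?_
      by_cases h1 : i ≤ p <;> by_cases h2 : j ≤ q <;> simp [h1, h2]
    simp_rw [this, Finset.mul_sum]
    calc _ = ∑ i, ∑ p, ∑ j, ∑ q, a p * b q * (if i ≤ p ∧ j ≤ q then N i j else 0) :=
          Finset.sum_congr rfl fun i _ => Finset.sum_comm
      _ = ∑ p, ∑ i, ∑ j, ∑ q, a p * b q * (if i ≤ p ∧ j ≤ q then N i j else 0) := Finset.sum_comm
      _ = ∑ p, ∑ i, ∑ q, ∑ j, a p * b q * (if i ≤ p ∧ j ≤ q then N i j else 0) :=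
          Finset.sum_congr rfl fun p _ => Finset.sum_congr rfl fun i _ => Finset.sum_comm
      _ = _ := Finset.sum_congr rfl fun p _ => Finset.sum_comm
  have k1 := key (fun i j => if i = j then 1 else 0)
  have k2 : ∑ i, s i * t i = ∑ i, ∑ j, s i * t j * (if i = j then 1 else 0 : ℝ) := by
    simp
  rw [k2, k1, key M]
  refine Finset.sum_le_sum fun p _ => Finset.sum_le_sum fun q _ =>
    mul_le_mul_of_nonneg_left ?_ (mul_nonneg (ha p) (hb q))
  rcases le_total p q with h | h
  · refine Finset.sum_le_sum fun i _ => ?_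
    by_cases hi : i ≤ p
    · have : (∑ j, if i ≤ p ∧ j ≤ q then (if i = j then 1 else 0 : ℝ) else 0) = 1 := by
        rw [Finset.sum_eq_single i]
        · simp [hi, hi.trans h]
        · intro j _ hj
          simp [hj.symm]
        · simp
      rw [this]
      refine le_trans (Finset.sum_le_sum fun j _ => ?_) (hr i)
      split_ifs
      exacts [le_rfl, hM _ _]
    · simp [hi]
  · rw [Finset.sum_comm, Finset.sum_comm (f := fun i j => if i ≤ p ∧ j ≤ q then (if i = j then 1 else 0 : ℝ) else 0)]
    refine Finset.sum_le_sum fun j _ => ?_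
    by_cases hj : j ≤ q
    · have : (∑ i, if i ≤ p ∧ j ≤ q then (if i = j then 1 else 0 : ℝ) else 0) = 1 := by
        rw [Finset.sum_eq_single j]
        · simp [hj, hj.trans h]
        · intro i _ hi
          simp [hi]
        · simp
      rw [this]
      refine le_trans (Finset.sum_le_sum fun i _ => ?_) (hc j)
      split_ifs
      exacts [le_rfl, hM _ _]
    · simp [hj]

lemma vn_bessel {m n : ℕ} (U : Matrix (Fin m) (Fin n) ℝ) (ε : Fin n → ℝ)
    (h : Uᵀ * U = diagonal ε) (h1 : ∀ i, ε i ≤ 1) (x : Fin m → ℝ) :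
    ∑ j, ((x ᵥ* U) j) ^ 2 ≤ x ⬝ᵥ x := by
  set y := x ᵥ* U with hy
  have h0 : 0 ≤ (x - U *ᵥ y) ⬝ᵥ (x - U *ᵥ y) :=
    Finset.sum_nonneg fun i _ => mul_self_nonneg _
  have e1 : x ⬝ᵥ (U *ᵥ y) = y ⬝ᵥ y := by rw [dotProduct_mulVec]
  have e2 : (U *ᵥ y) ⬝ᵥ (U *ᵥ y) = ∑ j, ε j * y j ^ 2 := by
    rw [dotProduct_mulVec, ← mulVec_transpose, mulVec_mulVec, h]
    simp only [dotProduct, mulVec_diagonal]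
    exact Finset.sum_congr rfl fun j _ => by ring
  have e3 : y ⬝ᵥ y = ∑ j, y j ^ 2 := Finset.sum_congr rfl fun j _ => by ring
  have e4 : ∑ j, ε j * y j ^ 2 ≤ ∑ j, y j ^ 2 :=
    Finset.sum_le_sum fun j _ => by nlinarith [h1 j, sq_nonneg (y j)]
  rw [sub_dotProduct, dotProduct_sub, dotProduct_sub, dotProduct_comm (U *ᵥ y) x, e1, e2, e3] at h0
  linarith

lemma vn_rows {m n : ℕ} (U U' : Matrix (Fin m) (Fin n) ℝ) (ε ε' : Fin n → ℝ)
    (h : Uᵀ * U = diagonal ε) (h1 : ∀ i, ε i ≤ 1)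
    (h' : U'ᵀ * U' = diagonal ε') (h1' : ∀ i, ε' i ≤ 1) (i : Fin n) :
    ∑ j, ((Uᵀ * U') i j) ^ 2 ≤ 1 := by
  have := vn_bessel U' ε' h' h1' (Uᵀ i)
  have e : Uᵀ i ⬝ᵥ Uᵀ i = ε i := by
    have := congrFun (congrFun h i) i
    simpa [Matrix.mul_apply, dotProduct] using this
  calc _ = ∑ j, ((Uᵀ i ᵥ* U') j) ^ 2 := rfl
    _ ≤ 1 := this.trans (e ▸ h1 i)

lemma vn_svd_s13 {m n : ℕ} (A : Matrix (Fin m) (Fin n) ℝ) :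
    ∃ (s ε : Fin n → ℝ) (U : Matrix (Fin m) (Fin n) ℝ) (V : Matrix (Fin n) (Fin n) ℝ),
      Antitone s ∧ (∀ i, 0 ≤ s i) ∧ (∀ i, m ≤ i.val → s i = 0) ∧
      (∀ i, singularValue A i = s (Fin.castLE (Nat.min_le_right m n) i)) ∧
      A = U * diagonal s * Vᵀ ∧ Uᵀ * U = diagonal ε ∧ (∀ i, ε i ≤ 1) ∧ Vᵀ * V = 1 := by
  set hA := Matrix.isHermitian_conjTranspose_mul_self A with hAdef
  set ev : Fin n → ℝ := fun j => Real.sqrt (hA.eigenvalues j) with hev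
  have hnn : ∀ j, 0 ≤ hA.eigenvalues j :=
    (Matrix.posSemidef_conjTranspose_mul_self A).eigenvalues_nonneg
  set e : Equiv.Perm (Fin n) := Fin.revPerm.trans (Tuple.sort ev) with he
  set s : Fin n → ℝ := fun i => ev (e i) with hs
  have hanti : Antitone s := by
    intro i j hij
    exact Tuple.monotone_sort ev (Fin.rev_le_rev.2 hij)
  have hs0 : ∀ i, 0 ≤ s i := fun i => Real.sqrt_nonneg _
  set V0 : Matrix (Fin n) (Fin n) ℝ := (hA.eigenvectorUnitary : Matrix (Fin n) (Fin n) ℝ) with hV0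
  have hst : ∀ X : Matrix (Fin n) (Fin n) ℝ, star X = Xᵀ := fun X =>
    conjTranspose_eq_transpose_of_trivial X
  have hV01 : V0ᵀ * V0 = 1 := by
    have := Unitary.coe_star_mul_self hA.eigenvectorUnitary
    rw [hst] at this
    exact this
  have hspec : Aᵀ * A = V0 * diagonal hA.eigenvalues * V0ᵀ := by
    have := hA.spectral_theorem
    rw [Unitary.conjStarAlgAut_apply, hst] at this
    rw [← conjTranspose_eq_transpose_of_trivial A]
    exact this
  set V : Matrix (Fin n) (Fin n) ℝ := V0.submatrix id e with hV
  have hV1 : Vᵀ * V = 1 := by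
    have : Vᵀ * V = (V0ᵀ * V0).submatrix e e := by
      ext i j; simp [hV, Matrix.mul_apply]
    rw [this, hV01]; simp
  have hV2 : V * Vᵀ = 1 := mul_eq_one_comm.1 hV1
  have hdiag : (A * V)ᵀ * (A * V) = diagonal (fun i => s i ^ 2) := by
    have h1 : V0ᵀ * (Aᵀ * A) * V0 = diagonal hA.eigenvalues := by
      rw [hspec]
      calc _ = (V0ᵀ * V0) * diagonal hA.eigenvalues * (V0ᵀ * V0) := by
            simp only [Matrix.mul_assoc]
        _ = _ := by simp [hV01]
    have h2 : (A * V)ᵀ * (A * V) = (V0ᵀ * (Aᵀ * A) * V0).submatrix e e := by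
      have : A * V = (A * V0).submatrix id e := by
        ext i j; simp [hV, Matrix.mul_apply]
      have h3 : V0ᵀ * (Aᵀ * A) * V0 = (A * V0)ᵀ * (A * V0) := by
        simp only [Matrix.transpose_mul, Matrix.mul_assoc]
      rw [this, h3]
      ext i j; simp [Matrix.mul_apply]
    rw [h2, h1]
    ext i j
    by_cases hij : i = j
    · subst hij
      rw [submatrix_apply, diagonal_apply_eq, diagonal_apply_eq]
      exact (Real.sq_sqrt (hnn _)).symm
    · simp [hij]
  refine ⟨s, fun i => (s i)⁻¹ * (s i ^ 2) * (s i)⁻¹, A * V * diagonal (fun i => (s i)⁻¹), V,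
    hanti, hs0, ?_, ?_, ?_, ?_, ?_, hV1⟩
  · intro i hi
    by_contra hne
    have hpos : 0 < s i := lt_of_le_of_ne (hs0 i) (Ne.symm hne)
    have hr : (Aᴴ * A).rank ≤ m := by
      refine (Matrix.rank_mul_le_right _ _).trans ?_
      simpa using Matrix.rank_le_card_height A
    rw [hA.rank_eq_card_non_zero_eigs] at hr
    have hinj : Fintype.card (Fin (i.val + 1)) ≤ Fintype.card {j // hA.eigenvalues j ≠ 0} := by
      refine Fintype.card_le_of_injective
        (fun k : Fin (i.val + 1) => ⟨e ⟨k.val, by omega⟩, ?_⟩) ?_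
      · intro h0
        have h1 : s i ≤ s ⟨k.val, by omega⟩ := hanti (Fin.le_def.2 (by simp; omega))
        have h2 : s ⟨k.val, by omega⟩ = 0 := by
          change Real.sqrt (hA.eigenvalues (e ⟨k.val, by omega⟩)) = 0
          rw [h0, Real.sqrt_zero]
        linarith
      · intro k l hkl
        simpa [Fin.ext_iff] using hkl
    rw [Fintype.card_fin] at hinj
    omega
  · intro i
    rfl
  · have hz : A * V * diagonal (fun i => (s i)⁻¹) * diagonal s = A * V := by
      rw [Matrix.mul_assoc (A * V), diagonal_mul_diagonal]
      ext i j
      rw [mul_diagonal]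
      by_cases h : s j = 0
      · have h1 := congrFun (congrFun hdiag j) j
        rw [diagonal_apply_eq, h, Matrix.mul_apply] at h1
        have h2 : ∑ k, (A * V) k j * (A * V) k j = 0 := by simpa using h1
        rw [Finset.sum_eq_zero_iff_of_nonneg (fun k _ => mul_self_nonneg _)] at h2
        have h3 := mul_self_eq_zero.1 (h2 i (Finset.mem_univ _))
        rw [h3, zero_mul]
      · rw [inv_mul_cancel₀ h, mul_one]
    rw [hz, Matrix.mul_assoc, hV2, Matrix.mul_one]
  · rw [Matrix.transpose_mul, diagonal_transpose]
    calc _ = diagonal (fun i => (s i)⁻¹) * ((A * V)ᵀ * (A * V)) * diagonal (fun i => (s i)⁻¹) := by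
          simp only [Matrix.mul_assoc]
      _ = _ := by rw [hdiag, diagonal_mul_diagonal, diagonal_mul_diagonal]
  · intro i
    by_cases h : s i = 0
    · simp [h]
    · apply le_of_eq
      field_simp

/-- Von Neumann's trace inequality for rectangular matrices:
`tr(A·Bᵀ) ≤ ∑_{i=1}^{min m n} σᵢ(A)·σᵢ(B)`. -/
theorem stmt13 (m n : ℕ) (A B : Matrix (Fin m) (Fin n) ℝ) :
    Matrix.trace (A * Bᵀ) ≤ ∑ i : Fin (min m n), singularValue A i * singularValue B i := by
  obtain ⟨s, ε, U, V, hs, hs0, hsm, hsA, hA, hU, hε, hV⟩ := vn_svd_s13 A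
  obtain ⟨t, δ, P, Q, ht, ht0, htm, htB, hB, hP, hδ, hQ⟩ := vn_svd_s13 B
  rw [← diagonal_one] at hV hQ
  have hone : ∀ i : Fin n, (fun _ => (1 : ℝ)) i ≤ 1 := fun _ => le_rfl
  have htr : Matrix.trace (A * Bᵀ) =
      ∑ i, ∑ j, s i * t j * ((Uᵀ * P) i j * (Vᵀ * Q) i j) := by
    have h1 : Matrix.trace (A * Bᵀ) =
        Matrix.trace (diagonal s * (Vᵀ * Q) * (diagonal t * (Uᵀ * P)ᵀ)) := by
      conv_lhs => rw [hA, hB]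
      rw [Matrix.mul_assoc U, Matrix.mul_assoc U, Matrix.trace_mul_comm]
      simp only [Matrix.transpose_mul, Matrix.transpose_transpose, diagonal_transpose,
        Matrix.mul_assoc]
    rw [h1]
    simp only [Matrix.trace, Matrix.diag_apply]
    refine Finset.sum_congr rfl fun i _ => ?_
    rw [Matrix.mul_apply]
    refine Finset.sum_congr rfl fun j _ => ?_
    rw [diagonal_mul, diagonal_mul, Matrix.transpose_apply]
    ring
  have hcol : ∀ {k : ℕ} (X Y : Matrix (Fin k) (Fin n) ℝ) (i j : Fin n),
      (Xᵀ * Y) i j = (Yᵀ * X) j i := by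
    intro k X Y i j
    rw [← Matrix.transpose_apply (Xᵀ * Y), Matrix.transpose_mul, Matrix.transpose_transpose]
  have hle : Matrix.trace (A * Bᵀ) ≤ ∑ i, s i * t i := by
    rw [htr]
    refine le_trans ?_ (vn_sub n s t hs hs0 ht ht0
      (fun i j => (((Uᵀ * P) i j) ^ 2 + ((Vᵀ * Q) i j) ^ 2) / 2) ?_ ?_ ?_)
    · refine Finset.sum_le_sum fun i _ => Finset.sum_le_sum fun j _ =>
        mul_le_mul_of_nonneg_left ?_ (mul_nonneg (hs0 i) (ht0 j))
      nlinarith [sq_nonneg ((Uᵀ * P) i j - (Vᵀ * Q) i j)]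
    · intro i j
      positivity
    · intro i
      have h1 := vn_rows U P ε δ hU hε hP hδ i
      have h2 := vn_rows V Q _ _ hV hone hQ hone i
      rw [← Finset.sum_div, Finset.sum_add_distrib]
      linarith
    · intro j
      have h1 := vn_rows P U δ ε hP hδ hU hε j
      have h2 := vn_rows Q V _ _ hQ hone hV hone j
      simp only [hcol U P, hcol V Q]
      rw [← Finset.sum_div, Finset.sum_add_distrib]
      linarith
  refine hle.trans (le_of_eq ?_)
  simp only [hsA, htB]
  symm
  have := Finset.sum_map Finset.univ (Fin.castLEEmb (Nat.min_le_right m n))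
    (fun i => s i * t i)
  refine Eq.trans this.symm ?_
  refine Finset.sum_subset (Finset.subset_univ _) fun i _ hi => ?_
  have hmi : m ≤ i.val := by
    by_contra hlt
    apply hi
    rw [Finset.mem_map]
    exact ⟨⟨i.val, by have := i.isLt; omega⟩, Finset.mem_univ _, rfl⟩
  rw [hsm i hmi, zero_mul]
end

section
/- Let A ∈ ℝ^{m×k}, B ∈ ℝ^{k×n}, and r := min{rank(A), rank(B)}. Then for every p > 0, Σ_{i=1}^{r} σ_i(AB)^p ≤ Σ_{i=1}^{r} σ_i(A)^p · σ_i(B)^p, where σ_i denotes the i-th largest singular value. -/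
open Matrix

open Finset in
lemma aux_det_expand {l n : ℕ} (d : Fin n → ℝ) (Y : Matrix (Fin n) (Fin l) ℝ) :
    (Nat.factorial l : ℝ) * (Yᵀ * Matrix.diagonal d * Y).det =
      ∑ f : Fin l → Fin n, (∏ i, d (f i)) * (Y.submatrix f id).det ^ 2 := by
  have h1 : (Yᵀ * Matrix.diagonal d * Y).det =
      ∑ f : Fin l → Fin n, (∏ i, d (f i)) * (∏ i, Y (f i) i) * (Y.submatrix f id).det := by
    have : ∀ f : Fin l → Fin n, (Y.submatrix f id).det =
        ∑ σ : Equiv.Perm (Fin l), (Equiv.Perm.sign σ : ℝ) * ∏ i, Y (f i) (σ i) := by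
      intro f
      rw [← Matrix.det_transpose, Matrix.det_apply']
      simp
    simp only [this]
    simp only [Matrix.det_apply', Matrix.mul_apply (M := Yᵀ * Matrix.diagonal d),
      Matrix.mul_diagonal, prod_univ_sum, mul_sum,
      Fintype.piFinset_univ]
    rw [Finset.sum_comm]
    refine sum_congr rfl fun f _ => sum_congr rfl fun σ _ => ?_
    simp only [Matrix.transpose_apply, prod_mul_distrib]
    ring
  have h2 : ∀ σ : Equiv.Perm (Fin l), (Yᵀ * Matrix.diagonal d * Y).det =
      ∑ f : Fin l → Fin n, (∏ i, d (f i)) *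
        ((Equiv.Perm.sign σ : ℝ) * ∏ i, Y (f (σ i)) i) * (Y.submatrix f id).det := by
    intro σ
    rw [h1, ← (Equiv.arrowCongr σ (Equiv.refl (Fin n))).symm.sum_comp]
    refine sum_congr rfl fun f _ => ?_
    have e : ((Equiv.arrowCongr σ (Equiv.refl (Fin n))).symm f) = f ∘ σ := by
      ext i; simp
    rw [e]
    have e2 : (Y.submatrix (f ∘ σ) id).det
        = (Equiv.Perm.sign σ : ℝ) * (Y.submatrix f id).det := by
      have := Matrix.det_permute σ (Y.submatrix f id)
      simpa using this
    rw [e2]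
    have e3 : ∏ i, d ((f ∘ σ) i) = ∏ i, d (f i) := Equiv.prod_comp σ (fun i => d (f i))
    rw [e3]
    simp only [Function.comp]
    ring
  have h3 : ∑ σ : Equiv.Perm (Fin l), (Yᵀ * Matrix.diagonal d * Y).det =
      (Nat.factorial l : ℝ) * (Yᵀ * Matrix.diagonal d * Y).det := by
    simp [Fintype.card_perm]
  rw [← h3, sum_congr rfl (fun σ _ => h2 σ), sum_comm]
  refine sum_congr rfl fun f _ => ?_
  rw [← sum_mul, ← mul_sum, sq, ← mul_assoc]
  congr 2
  rw [Matrix.det_apply']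
  rfl

lemma aux_prod_le {l n : ℕ} (d : ℕ → ℝ) (hd : Antitone d) (h0 : ∀ i, 0 ≤ d i)
    (f : Fin l → Fin n) (hf : Function.Injective f) :
    ∏ i, d (f i) ≤ ∏ i : Fin l, d i := by
  classical
  set s := Finset.univ.image f with hs
  have hc : s.card = l := by rw [hs, Finset.card_image_of_injective _ hf]; simp
  have e1 : ∏ i, d (f i) = ∏ j ∈ s, d j := by
    rw [hs, Finset.prod_image (fun _ _ _ _ h => hf h)]
  have e2 : ∏ j ∈ s, d j = ∏ i, d (s.orderEmbOfFin hc i) := by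
    conv_lhs => rw [← Finset.image_orderEmbOfFin_univ s hc]
    rw [Finset.prod_image (fun _ _ _ _ h => (s.orderEmbOfFin hc).injective h)]
  rw [e1, e2]
  refine Finset.prod_le_prod (fun _ _ => h0 _) fun i _ => hd ?_
  have key : ∀ (j : ℕ) (hj : j < l), j ≤ (s.orderEmbOfFin hc ⟨j, hj⟩ : ℕ) := by
    intro j
    induction j with
    | zero => intro _; exact Nat.zero_le _
    | succ j ih =>
      intro hj
      have h1 := ih (by omega)
      have h2 : s.orderEmbOfFin hc ⟨j, by omega⟩ < s.orderEmbOfFin hc ⟨j+1, hj⟩ :=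
        (s.orderEmbOfFin hc).strictMono (by simp [Fin.lt_def])
      have h3 := Fin.lt_def.1 h2
      omega
  exact key i i.2

lemma aux_det_le {l n : ℕ} (d : ℕ → ℝ) (hd : Antitone d) (h0 : ∀ i, 0 ≤ d i)
    (Y : Matrix (Fin n) (Fin l) ℝ) :
    (Yᵀ * Matrix.diagonal (fun i : Fin n => d i) * Y).det ≤ (∏ i : Fin l, d i) * (Yᵀ * Y).det := by
  have h1 := aux_det_expand (fun i : Fin n => d i) Y
  have h2 := aux_det_expand (fun _ : Fin n => (1:ℝ)) Y
  have h3 : Matrix.diagonal (fun _ : Fin n => (1:ℝ)) = 1 := Matrix.diagonal_one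
  rw [h3, Matrix.mul_one] at h2
  have hpos : (0:ℝ) < Nat.factorial l := by exact_mod_cast Nat.factorial_pos l
  refine le_of_mul_le_mul_left ?_ hpos
  rw [h1, mul_left_comm, h2, Finset.mul_sum]
  refine Finset.sum_le_sum fun f _ => ?_
  by_cases hf : Function.Injective f
  · simp only [Finset.prod_const_one, one_mul]
    exact mul_le_mul_of_nonneg_right (aux_prod_le d hd h0 f hf) (sq_nonneg _)
  · have : (Y.submatrix f id).det = 0 := by
      simp only [Function.Injective, not_forall] at hf
      obtain ⟨i, j, hij, hne⟩ := hf
      apply Matrix.det_zero_of_row_eq hne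
      ext x
      simp [hij]
    simp [this]

noncomputable def auxEv {m n : ℕ} (A : Matrix (Fin m) (Fin n) ℝ) : Fin n → ℝ :=
  fun j => Real.sqrt ((Matrix.isHermitian_conjTranspose_mul_self A).eigenvalues j)

noncomputable def auxSv {m n : ℕ} (A : Matrix (Fin m) (Fin n) ℝ) (i : ℕ) : ℝ :=
  if h : i < n then auxEv A (Tuple.sort (auxEv A) (Fin.rev ⟨i, h⟩)) else 0

lemma auxSv_nonneg {m n : ℕ} (A : Matrix (Fin m) (Fin n) ℝ) (i : ℕ) : 0 ≤ auxSv A i := by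
  unfold auxSv
  split_ifs
  · exact Real.sqrt_nonneg _
  · exact le_rfl

lemma auxSv_antitone {m n : ℕ} (A : Matrix (Fin m) (Fin n) ℝ) : Antitone (auxSv A) := by
  intro i j hij
  by_cases hj : j < n
  · have hi : i < n := by omega
    simp only [auxSv, hj, hi, dif_pos]
    apply Tuple.monotone_sort (auxEv A)
    rw [Fin.rev_le_rev]
    exact hij
  · have : auxSv A j = 0 := by simp [auxSv, hj]
    rw [this]
    exact auxSv_nonneg A i

lemma singularValue_eq {m n : ℕ} (A : Matrix (Fin m) (Fin n) ℝ) (i : Fin (min m n)) :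
    singularValue A i = auxSv A i := by
  have : (i : ℕ) < n := lt_of_lt_of_le i.2 (min_le_right _ _)
  simp only [auxSv, this, dif_pos]
  rfl

lemma aux_spectral {m n : ℕ} (A : Matrix (Fin m) (Fin n) ℝ) :
    ∃ U : Matrix (Fin n) (Fin n) ℝ, Uᵀ * U = 1 ∧ U * Uᵀ = 1 ∧
      Aᵀ * A = U * Matrix.diagonal (fun i : Fin n => auxSv A i ^ 2) * Uᵀ := by
  have hA := Matrix.isHermitian_conjTranspose_mul_self A
  set V : Matrix (Fin n) (Fin n) ℝ := (hA.eigenvectorUnitary).1 with hV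
  have hs : star V = Vᵀ := by
    rw [Matrix.star_eq_conjTranspose, Matrix.conjTranspose_eq_transpose_of_trivial]
  have v1 : Vᵀ * V = 1 := by
    rw [← hs]; exact Unitary.coe_star_mul_self hA.eigenvectorUnitary
  have v2 : V * Vᵀ = 1 := by
    rw [← hs]; exact Unitary.coe_mul_star_self hA.eigenvectorUnitary
  have v3 : Aᵀ * A = V * Matrix.diagonal hA.eigenvalues * Vᵀ := by
    have := hA.spectral_theorem
    rw [Unitary.conjStarAlgAut_apply] at this
    rw [← hs]
    rw [← Matrix.conjTranspose_eq_transpose_of_trivial A]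
    exact this
  let e : Fin n ≃ Fin n := Fin.revPerm.trans (Tuple.sort (auxEv A))
  have hd : (fun i : Fin n => auxSv A i ^ 2) = hA.eigenvalues ∘ e := by
    ext i
    simp only [auxSv, i.2, dif_pos]
    unfold auxEv
    rw [Real.sq_sqrt]
    · rfl
    · exact (Matrix.posSemidef_conjTranspose_mul_self A).eigenvalues_nonneg _
  refine ⟨V.submatrix id e, ?_, ?_, ?_⟩
  · rw [Matrix.transpose_submatrix, Matrix.submatrix_mul _ _ _ _ _ Function.bijective_id |>.symm, v1]
    simp
  · rw [Matrix.transpose_submatrix, Matrix.submatrix_mul _ _ _ _ _ e.bijective |>.symm, v2]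
    simp
  · rw [hd, v3, ← Matrix.submatrix_diagonal_equiv, Matrix.transpose_submatrix,
      Matrix.submatrix_mul _ _ _ _ _ e.bijective |>.symm,
      Matrix.submatrix_mul _ _ _ _ _ e.bijective |>.symm]
    simp

lemma aux_key {m n l : ℕ} (A : Matrix (Fin m) (Fin n) ℝ) (X : Matrix (Fin n) (Fin l) ℝ) :
    ((A * X)ᵀ * (A * X)).det ≤ (∏ i : Fin l, auxSv A i ^ 2) * (Xᵀ * X).det := by
  obtain ⟨U, h1, h2, h3⟩ := aux_spectral A
  have := aux_det_le (fun i => auxSv A i ^ 2)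
    (fun i j hij => pow_le_pow_left₀ (auxSv_nonneg A j) (auxSv_antitone A hij) 2)
    (fun i => sq_nonneg _) (Uᵀ * X)
  have e1 : (Uᵀ * X)ᵀ * (Uᵀ * X) = Xᵀ * X := by
    rw [Matrix.transpose_mul, Matrix.transpose_transpose, Matrix.mul_assoc, ← Matrix.mul_assoc U,
      h2, Matrix.one_mul]
  have e2 : (Uᵀ * X)ᵀ * Matrix.diagonal (fun i : Fin n => auxSv A i ^ 2) * (Uᵀ * X)
      = (A * X)ᵀ * (A * X) := by
    rw [Matrix.transpose_mul A, Matrix.mul_assoc Xᵀ, ← Matrix.mul_assoc Aᵀ, h3]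
    simp only [Matrix.transpose_mul, Matrix.transpose_transpose, Matrix.mul_assoc]
  rw [e1, e2] at this
  exact this

lemma aux_attain {m n l : ℕ} (hl : l ≤ n) (A : Matrix (Fin m) (Fin n) ℝ) :
    ∃ X : Matrix (Fin n) (Fin l) ℝ, Xᵀ * X = 1 ∧
      ((A * X)ᵀ * (A * X)).det = ∏ i : Fin l, auxSv A i ^ 2 := by
  obtain ⟨U, h1, h2, h3⟩ := aux_spectral A
  have hinj : Function.Injective (Fin.castLE hl) := Fin.castLE_injective hl
  refine ⟨U.submatrix id (Fin.castLE hl), ?_, ?_⟩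
  · rw [Matrix.transpose_submatrix, Matrix.submatrix_mul _ _ _ _ _ Function.bijective_id |>.symm, h1,
      Matrix.submatrix_one _ hinj]
  · have e : (A * U.submatrix id (Fin.castLE hl))ᵀ * (A * U.submatrix id (Fin.castLE hl))
        = (Uᵀ * (Aᵀ * A) * U).submatrix (Fin.castLE hl) (Fin.castLE hl) := by
      have : A * U.submatrix id (Fin.castLE hl) = (A * U).submatrix id (Fin.castLE hl) := by
        ext i j; simp [Matrix.mul_apply]
      rw [this, Matrix.transpose_submatrix,
        Matrix.submatrix_mul _ _ _ _ _ Function.bijective_id |>.symm, Matrix.transpose_mul]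
      simp only [Matrix.mul_assoc]
    have e2 : Uᵀ * (Aᵀ * A) * U = Matrix.diagonal (fun i : Fin n => auxSv A i ^ 2) := by
      rw [h3]
      calc _ = (Uᵀ * U) * Matrix.diagonal (fun i : Fin n => auxSv A i ^ 2) * (Uᵀ * U) := by
            simp only [Matrix.mul_assoc]
        _ = _ := by rw [h1]; simp
    rw [e, e2, Matrix.submatrix_diagonal _ _ hinj, Matrix.det_diagonal]
    simp

lemma aux_horn {m k n l : ℕ} (hl : l ≤ n) (A : Matrix (Fin m) (Fin k) ℝ)
    (B : Matrix (Fin k) (Fin n) ℝ) :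
    ∏ i ∈ Finset.range l, auxSv (A * B) i ≤ ∏ i ∈ Finset.range l, (auxSv A i * auxSv B i) := by
  obtain ⟨X, hX, h⟩ := aux_attain hl (A * B)
  have h1 := aux_key A (B * X)
  have h2 := aux_key B X
  rw [hX, Matrix.det_one, mul_one] at h2
  rw [← Matrix.mul_assoc A B X, h] at h1
  have h3 : ∏ i : Fin l, auxSv (A * B) i ^ 2 ≤
      (∏ i : Fin l, auxSv A i ^ 2) * ∏ i : Fin l, auxSv B i ^ 2 :=
    h1.trans (mul_le_mul_of_nonneg_left h2 (Finset.prod_nonneg fun _ _ => sq_nonneg _))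
  rw [← Finset.prod_mul_distrib] at h3
  simp only [← mul_pow] at h3
  rw [Finset.prod_pow, Finset.prod_pow] at h3
  rw [Finset.prod_range, Finset.prod_range]
  exact le_of_sq_le_sq h3 (Finset.prod_nonneg fun _ _ =>
    mul_nonneg (auxSv_nonneg _ _) (auxSv_nonneg _ _))

lemma aux_abel (x c : ℕ → ℝ) (hx : Antitone x) (n : ℕ)
    (hc : ∀ l ≤ n + 1, 0 ≤ ∑ i ∈ Finset.range l, c i) :
    x n * ∑ i ∈ Finset.range (n + 1), c i ≤ ∑ i ∈ Finset.range (n + 1), x i * c i := by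
  induction n with
  | zero => simp
  | succ n ih =>
    have := ih (fun l hl => hc l (by omega))
    rw [Finset.sum_range_succ _ (n + 1), Finset.sum_range_succ _ (n + 1)]
    have h1 := hc (n + 1) (by omega)
    have h2 := mul_le_mul_of_nonneg_right (hx (Nat.le_succ n)) h1
    simp only [Nat.succ_eq_add_one] at h2
    linarith

lemma aux_major (x y : ℕ → ℝ) (hx : Antitone x) (x0 : ∀ i, 0 ≤ x i) (y0 : ∀ i, 0 ≤ y i) (n : ℕ)
    (h : ∀ l ≤ n, ∏ i ∈ Finset.range l, x i ≤ ∏ i ∈ Finset.range l, y i) :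
    ∑ i ∈ Finset.range n, x i ≤ ∑ i ∈ Finset.range n, y i := by
  induction n with
  | zero => simp
  | succ n ih =>
    rcases (x0 n).eq_or_lt with hn | hn
    · have := ih (fun l hl => h l (by omega))
      rw [Finset.sum_range_succ, Finset.sum_range_succ, ← hn]
      linarith [y0 n]
    · have xpos : ∀ i, i < n + 1 → 0 < x i := fun i hi => hn.trans_le (hx (by omega))
      have ypos : ∀ i, i < n + 1 → 0 < y i := by
        intro i hi
        have h1 : 0 < ∏ i ∈ Finset.range (n + 1), y i :=
          (Finset.prod_pos fun i hi => xpos i (Finset.mem_range.1 hi)).trans_le (h _ le_rfl)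
        have h2 := Finset.prod_ne_zero_iff.1 h1.ne' i (Finset.mem_range.2 hi)
        exact lt_of_le_of_ne (y0 i) h2.symm
      have hc : ∀ l ≤ n + 1, 0 ≤ ∑ i ∈ Finset.range l, (Real.log (y i) - Real.log (x i)) := by
        intro l hl
        have hxl : ∀ i ∈ Finset.range l, 0 < x i := fun i hi =>
          xpos i (by have := Finset.mem_range.1 hi; omega)
        have hyl : ∀ i ∈ Finset.range l, 0 < y i := fun i hi =>
          ypos i (by have := Finset.mem_range.1 hi; omega)
        rw [Finset.sum_sub_distrib, ← Real.log_prod (fun i hi => (hxl i hi).ne'),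
          ← Real.log_prod (fun i hi => (hyl i hi).ne')]
        exact sub_nonneg.2 (Real.log_le_log (Finset.prod_pos hxl) (h l hl))
      have h1 := aux_abel x _ hx n hc
      have h2 := (mul_nonneg hn.le (hc _ le_rfl)).trans h1
      have h3 : ∑ i ∈ Finset.range (n + 1), x i * (Real.log (y i) - Real.log (x i)) ≤
          ∑ i ∈ Finset.range (n + 1), (y i - x i) := by
        refine Finset.sum_le_sum fun i hi => ?_
        have hxi := xpos i (Finset.mem_range.1 hi)
        have hyi := ypos i (Finset.mem_range.1 hi)
        rw [← Real.log_div hyi.ne' hxi.ne']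
        have := Real.log_le_sub_one_of_pos (div_pos hyi hxi)
        calc _ ≤ x i * (y i / x i - 1) := mul_le_mul_of_nonneg_left this hxi.le
          _ = _ := by field_simp
      rw [Finset.sum_sub_distrib] at h3
      linarith

/-- For `A ∈ ℝ^{m×k}`, `B ∈ ℝ^{k×n}`, `r = min{rank A, rank B}` and any `p > 0`:
`∑_{i=1}^r σᵢ(AB)^p ≤ ∑_{i=1}^r σᵢ(A)^p·σᵢ(B)^p`. -/
theorem stmt14 (m k n : ℕ) (A : Matrix (Fin m) (Fin k) ℝ) (B : Matrix (Fin k) (Fin n) ℝ)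
    (p : ℝ) (hp : 0 < p) :
    ∑ i : Fin (min A.rank B.rank),
        singularValue (A * B)
          (Fin.castLE (le_min ((min_le_left _ _).trans (Matrix.rank_le_height A))
            ((min_le_right _ _).trans (Matrix.rank_le_width B))) i) ^ p ≤
      ∑ i : Fin (min A.rank B.rank),
        singularValue A
            (Fin.castLE (le_min ((min_le_left _ _).trans (Matrix.rank_le_height A))
              ((min_le_left _ _).trans (Matrix.rank_le_width A))) i) ^ p *
          singularValue B
            (Fin.castLE (le_min ((min_le_right _ _).trans (Matrix.rank_le_height B))
              ((min_le_right _ _).trans (Matrix.rank_le_width B))) i) ^ p := by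
  simp only [singularValue_eq, Fin.val_castLE]
  have hr : min A.rank B.rank ≤ n := (min_le_right _ _).trans (Matrix.rank_le_width B)
  rw [← Finset.sum_range (fun i => auxSv (A * B) i ^ p),
    ← Finset.sum_range (fun i => auxSv A i ^ p * auxSv B i ^ p)]
  apply aux_major
  · exact fun i j hij => Real.rpow_le_rpow (auxSv_nonneg _ _) (auxSv_antitone _ hij) hp.le
  · exact fun i => Real.rpow_nonneg (auxSv_nonneg _ _) _
  · exact fun i => mul_nonneg (Real.rpow_nonneg (auxSv_nonneg _ _) _)
      (Real.rpow_nonneg (auxSv_nonneg _ _) _)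
  · intro l hl
    have h := aux_horn (hl.trans hr) A B
    have h' := Real.rpow_le_rpow (Finset.prod_nonneg fun _ _ => auxSv_nonneg _ _) h hp.le
    rw [← Real.finsetProd_rpow _ _ (fun _ _ => auxSv_nonneg _ _),
      ← Real.finsetProd_rpow _ _
        (fun _ _ => mul_nonneg (auxSv_nonneg _ _) (auxSv_nonneg _ _))] at h'
    simpa only [Real.mul_rpow (auxSv_nonneg _ _) (auxSv_nonneg _ _)] using h'
end

section
/- Let X ∈ ℝ^{n×n} be a doubly stochastic matrix with X ≠ I (the identity matrix). Then there exists a permutation σ of {1, …, n} that is not the identity permutation such that the product x_{1σ(1)}·x_{2σ(2)}···x_{nσ(n)} > 0, i.e., x_{iσ(i)} > 0 for all i. -/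
/-- If `X` is an `n×n` doubly stochastic matrix that is not the identity
matrix, then there exists a non-identity permutation `σ` of `{1, …, n}` such
that `x_{1σ(1)}·x_{2σ(2)}···x_{nσ(n)} > 0`, i.e. `x_{iσ(i)} > 0` for all `i`. -/
theorem stmt17 (n : ℕ) (X : Matrix (Fin n) (Fin n) ℝ)
    (hnn : ∀ i j, 0 ≤ X i j)
    (hrow : ∀ i, ∑ j, X i j = 1)
    (hcol : ∀ j, ∑ i, X i j = 1)
    (hne : X ≠ 1) :
    ∃ σ : Equiv.Perm (Fin n), σ ≠ Equiv.refl (Fin n) ∧ ∀ i, 0 < X i (σ i) := by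
  have hM : X ∈ doublyStochastic ℝ (Fin n) :=
    mem_doublyStochastic_iff_sum.mpr ⟨hnn, hrow, hcol⟩
  obtain ⟨w, hw0, hw1, hwX⟩ := exists_eq_sum_perm_of_mem_doublyStochastic hM
  by_cases h : ∃ σ : Equiv.Perm (Fin n), σ ≠ Equiv.refl (Fin n) ∧ w σ ≠ 0
  · obtain ⟨σ, hσ, hwσ⟩ := h
    refine ⟨σ, hσ, fun i => ?_⟩
    have hpos : 0 < w σ := lt_of_le_of_ne (hw0 σ) (Ne.symm hwσ)
    have e : X i (σ i) = ∑ τ : Equiv.Perm (Fin n), w τ * (if τ i = σ i then 1 else 0) := by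
      rw [← hwX, Matrix.sum_apply]
      refine Finset.sum_congr rfl fun τ _ => ?_
      simp [Equiv.Perm.permMatrix, PEquiv.toMatrix_apply, Equiv.toPEquiv_apply, eq_comm]
    rw [e]
    refine Finset.sum_pos' (fun τ _ => ?_) ⟨σ, Finset.mem_univ _, by simpa using hpos⟩
    split_ifs <;> simp [hw0 τ]
  · push Not at h
    exfalso
    apply hne
    rw [Finset.sum_eq_single (Equiv.refl (Fin n)) (fun τ _ hτ => h τ hτ) (by simp)] at hw1
    rw [← hwX, Finset.sum_eq_single (Equiv.refl (Fin n))
      (fun τ _ hτ => by rw [h τ hτ, zero_smul]) (by simp), hw1, one_smul]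
    simp [Equiv.Perm.permMatrix]
end

section
/- Let X ∈ ℝ^{n×n} be a doubly substochastic matrix, i.e., X has non-negative entries and every row sum and every column sum is at most 1. Then there exists a doubly stochastic matrix Y ∈ ℝ^{n×n} such that X ≤ Y entrywise, i.e., x_{ij} ≤ y_{ij} for all i, j. -/
/-- Every doubly substochastic matrix is dominated entrywise by a doubly
stochastic matrix. -/
theorem stmt18 (n : ℕ) (X : Matrix (Fin n) (Fin n) ℝ)
    (hnn : ∀ i j, 0 ≤ X i j)
    (hrow : ∀ i, ∑ j, X i j ≤ 1)
    (hcol : ∀ j, ∑ i, X i j ≤ 1) :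
    ∃ Y : Matrix (Fin n) (Fin n) ℝ,
      (∀ i j, 0 ≤ Y i j) ∧ (∀ i, ∑ j, Y i j = 1) ∧ (∀ j, ∑ i, Y i j = 1) ∧
      ∀ i j, X i j ≤ Y i j := by
  obtain ⟨a, ha⟩ : ∃ a : Fin n → ℝ, ∀ i, a i = 1 - ∑ j, X i j := ⟨_, fun _ => rfl⟩
  obtain ⟨b, hb⟩ : ∃ b : Fin n → ℝ, ∀ j, b j = 1 - ∑ i, X i j := ⟨_, fun _ => rfl⟩
  have ha0 : ∀ i, 0 ≤ a i := fun i => by rw [ha]; linarith [hrow i]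
  have hb0 : ∀ i, 0 ≤ b i := fun i => by rw [hb]; linarith [hcol i]
  have hab : ∑ i, a i = ∑ j, b j := by
    simp only [ha, hb, Finset.sum_sub_distrib]
    rw [Finset.sum_comm]
  have hS : 0 ≤ ∑ j, b j := Finset.sum_nonneg fun j _ => hb0 j
  have hp : ∀ i j, 0 ≤ a i * b j / ∑ j, b j := fun i j =>
    div_nonneg (mul_nonneg (ha0 i) (hb0 j)) hS
  refine ⟨fun i j => X i j + a i * b j / ∑ j, b j, fun i j => add_nonneg (hnn i j) (hp i j),
    fun i => ?_, fun j => ?_, fun i j => le_add_of_nonneg_right (hp i j)⟩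
  · have h : a i * (∑ j, b j) / ∑ j, b j = a i := by
      by_cases h0 : ∑ j, b j = 0
      · have := (Finset.sum_eq_zero_iff_of_nonneg fun i _ => ha0 i).1 (hab.trans h0) i
          (Finset.mem_univ i)
        simp [this]
      · exact mul_div_cancel_right₀ _ h0
    rw [Finset.sum_add_distrib, ← Finset.sum_div, ← Finset.mul_sum, h, ha]
    ring
  · have h : (∑ j, b j) * b j / ∑ j, b j = b j := by
      by_cases h0 : ∑ j, b j = 0
      · have := (Finset.sum_eq_zero_iff_of_nonneg fun i _ => hb0 i).1 h0 j
          (Finset.mem_univ j)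
        simp [this]
      · exact mul_div_cancel_left₀ _ h0
    rw [Finset.sum_add_distrib, ← Finset.sum_div, ← Finset.sum_mul, hab, h, hb]
    ring
end

section
/- Let g be a real-valued function defined on the set of n×n doubly stochastic matrices that is convex on this set (i.e., g(tX + (1−t)Y) ≤ t·g(X) + (1−t)·g(Y) for all doubly stochastic X, Y and t ∈ [0,1]). Then for every doubly stochastic matrix X ∈ ℝ^{n×n} there exists a permutation matrix P ∈ ℝ^{n×n} with g(X) ≤ g(P); consequently, the maximum of g over the set of doubly stochastic matrices is attained at a permutation matrix. -/
/-- A doubly stochastic matrix is doubly stochastic: non-negative entries, all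
row sums and all column sums equal to `1`. -/
def IsDoublyStochastic {n : ℕ} (X : Matrix (Fin n) (Fin n) ℝ) : Prop :=
  (∀ i j, 0 ≤ X i j) ∧ (∀ i, ∑ j, X i j = 1) ∧ (∀ j, ∑ i, X i j = 1)

/-- A real-valued function that is convex on the set of `n×n` doubly stochastic
matrices attains, at some permutation matrix, a value at least as large as its
value at any doubly stochastic matrix; consequently its maximum over the doubly
stochastic matrices is attained at a permutation matrix. -/
theorem stmt19 (n : ℕ) (g : Matrix (Fin n) (Fin n) ℝ → ℝ)
    (hg : ∀ X Y : Matrix (Fin n) (Fin n) ℝ, IsDoublyStochastic X → IsDoublyStochastic Y →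
      ∀ t : ℝ, 0 ≤ t → t ≤ 1 →
        g (t • X + (1 - t) • Y) ≤ t * g X + (1 - t) * g Y)
    (X : Matrix (Fin n) (Fin n) ℝ) (hX : IsDoublyStochastic X) :
    ∃ σ : Equiv.Perm (Fin n), g X ≤ g (σ.permMatrix ℝ) := by
  have hc : ConvexOn ℝ (doublyStochastic ℝ (Fin n) : Set (Matrix (Fin n) (Fin n) ℝ)) g := by
    refine ⟨convex_doublyStochastic, ?_⟩
    intro A hA B hB a b ha hb hab
    obtain rfl : b = 1 - a := by linarith
    simpa only [smul_eq_mul] using hg A B (mem_doublyStochastic_iff_sum.1 hA)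
      (mem_doublyStochastic_iff_sum.1 hB) a ha (by linarith)
  have hX' : X ∈ (doublyStochastic ℝ (Fin n) : Set (Matrix (Fin n) (Fin n) ℝ)) :=
    mem_doublyStochastic_iff_sum.2 hX
  rw [doublyStochastic_eq_convexHull_permMatrix] at hX' hc
  obtain ⟨_, ⟨σ, rfl⟩, hσ⟩ := hc.exists_ge_of_mem_convexHull (subset_convexHull ℝ _) hX'
  exact ⟨σ, hσ⟩
end
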